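/- arXiv:1107.1077 — 6 statements merged into one kernel-verified Lean document; each statement's English description precedes it below -/
import Mathlib

section
/- Let f be a nonzero real polynomial of total degree D ≥ 1 in d variables. Then the set of connected components of ℝ^d \ Z(f) = {x ∈ ℝ^d : f(x) ≠ 0} is finite, and its cardinality is at most 6·(2D)^d. -/
/-!
# Warren's bound on the components of the complement of a real hypersurface

Pick finitely many components of `{f ≠ 0}` and a ball of radius `R` around the origin that meets all
of them. Intersecting with the ball gives disjoint bounded open cells, and the polynomial
`p = f * (R ^ 2 - |x| ^ 2)`, of degree at most `n = D + 2`, vanishes on the frontier of each cell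
but not identically inside it. For small `ε > 0` the perturbation `p + ε * ∑ xᵢ ^ (n + 1)` still has
a local extremum in each cell (`eventually_exists_isLocalMax`), which is a solution of the system
`ε * (n + 1) * xᵢ ^ n + ∂ᵢ p = 0`.

The perturbation makes Bézout's theorem elementary. Since `∂ᵢ p` has degree less than `n`, the
equations allow each `xᵢ ^ n` to be replaced by terms of lower degree, so on any finite set of
solutions every function is a combination of the `n ^ d` monomials with all exponents below `n`;
hence there are at most `n ^ d` solutions (`card_le_pow_of_diagonal_system`).

This bounds the number of components by `(D + 2) ^ d` (`card_components_le`), which is at most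
`(2 * D) ^ d` when `D ≥ 2`. For `D = 1` the sets `{f > 0}` and `{f < 0}` are convex, so there are at
most two components (`card_components_le_two`).
-/

/-! ### Solutions of diagonal polynomial systems -/

/-- An elementary case of Bézout's bound: a system of `d` equations in `d` unknowns whose leading
forms are `c * xᵢ ^ m` has at most `m ^ d` real solutions. -/
theorem card_le_pow_of_diagonal_system {ι : Type*} [Fintype ι] {d m : ℕ}
    {c : ℝ} (hc : c ≠ 0) (g : Fin d → MvPolynomial (Fin d) ℝ)
    (hg : ∀ i, (g i).totalDegree < m) (z : ι → Fin d → ℝ) (hz : Function.Injective z)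
    (hzero : ∀ j i, c * z j i ^ m + MvPolynomial.eval (z j) (g i) = 0) :
    Fintype.card ι ≤ m ^ d := by
  classical
  let W : Submodule ℝ (ι → ℝ) :=
    Submodule.span ℝ (Set.range fun (α : Fin d → Fin m) (j : ι) => ∏ i, z j i ^ (α i : ℕ))
  -- Every polynomial agrees on the solutions with a combination of the reduced monomials.
  have hW : ∀ n : ℕ, ∀ p : MvPolynomial (Fin d) ℝ, p.totalDegree ≤ n →
      (fun j => MvPolynomial.eval (z j) p) ∈ W := by
    intro n
    induction n using Nat.strong_induction_on with
    | _ n ih =>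
    intro p hp
    have key : ∀ s : Fin d →₀ ℕ, s.degree ≤ n → (fun j => ∏ i, z j i ^ s i) ∈ W := by
      intro s hs
      by_cases hlt : ∀ i, s i < m
      · exact Submodule.subset_span ⟨fun i => ⟨s i, hlt i⟩, rfl⟩
      · push Not at hlt
        obtain ⟨i, hi⟩ := hlt
        obtain ⟨t, rfl⟩ : ∃ t, s = t + Finsupp.single i m :=
          ⟨s - Finsupp.single i m, (tsub_add_cancel_of_le (by simpa using hi)).symm⟩
        rw [map_add, Finsupp.degree_single] at hs
        -- Replacing `xᵢ ^ m` by `-c⁻¹ * gᵢ` lowers the total degree.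
        have hq : (MvPolynomial.monomial t (1 : ℝ) * g i).totalDegree < n := by
          refine (MvPolynomial.totalDegree_mul _ _).trans_lt ?_
          have h1 : _ ≤ t.degree := MvPolynomial.totalDegree_monomial_le t (1 : ℝ)
          have h2 := hg i
          omega
        have := W.smul_mem (-c⁻¹) (ih _ hq _ le_rfl)
        convert this using 1
        funext j
        have h0 := hzero j i
        have h1 : z j i ^ m = -c⁻¹ * MvPolynomial.eval (z j) (g i) := by
          field_simp
          linarith
        simp only [Finsupp.add_apply, pow_add, Finset.prod_mul_distrib, Pi.smul_apply,
          smul_eq_mul, map_mul, MvPolynomial.eval_monomial, one_mul]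
        have h2 : ∏ k, z j k ^ (Finsupp.single i m) k = z j i ^ m := by
          rw [Finset.prod_eq_single i (fun k _ hk => by
            rw [Finsupp.single_eq_of_ne hk, pow_zero])
            (by simp), Finsupp.single_eq_same]
        rw [h2, h1, Finsupp.prod_fintype _ _ (by simp)]
        ring
    have : (fun j => MvPolynomial.eval (z j) p) =
        ∑ s ∈ p.support, p.coeff s • (fun j => ∏ i, z j i ^ s i) := by
      funext j
      simp [MvPolynomial.eval_eq']
    rw [this]
    refine W.sum_mem fun s hs => W.smul_mem _ (key s ?_)
    exact (MvPolynomial.le_totalDegree hs).trans hp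
  -- Interpolation: the indicator of a single solution is the restriction of a polynomial.
  have hsingle : ∀ j, Pi.single j (1 : ℝ) ∈ W := by
    intro j
    have hsep : ∀ k, ∃ q : MvPolynomial (Fin d) ℝ, k ≠ j →
        MvPolynomial.eval (z k) q = 0 ∧ MvPolynomial.eval (z j) q = 1 := by
      intro k
      by_cases hk : k = j
      · exact ⟨0, fun h => absurd hk h⟩
      · obtain ⟨i, hi⟩ := Function.ne_iff.mp (hz.ne hk)
        refine ⟨MvPolynomial.C (z j i - z k i)⁻¹ *
          (MvPolynomial.X i - MvPolynomial.C (z k i)), fun _ => ⟨by simp, ?_⟩⟩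
        simp [inv_mul_cancel₀ (sub_ne_zero.mpr hi.symm)]
    choose q hq using hsep
    convert hW _ (∏ k ∈ Finset.univ.erase j, q k) le_rfl using 1
    funext k
    rw [map_prod]
    by_cases hk : k = j
    · subst hk
      rw [Pi.single_eq_same, Finset.prod_eq_one]
      intro l hl
      exact (hq l (Finset.ne_of_mem_erase hl)).2
    · rw [Pi.single_eq_of_ne hk, Finset.prod_eq_zero (i := k) (by simp [hk]) (hq k hk).1]
  have htop : W = ⊤ := by
    rw [eq_top_iff]
    intro v _
    rw [pi_eq_sum_univ' v]
    exact W.sum_mem fun j _ => W.smul_mem _ (by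
      simpa [Pi.single_apply, eq_comm, Pi.single, Function.update_apply, funext_iff] using hsingle j)
  calc Fintype.card ι = Module.finrank ℝ (ι → ℝ) := (Module.finrank_fintype_fun_eq_card ℝ).symm
    _ = Module.finrank ℝ W := by rw [htop, finrank_top]
    _ ≤ Fintype.card (Fin d → Fin m) := finrank_range_le_card _
    _ = m ^ d := by simp

/-! ### Critical points of polynomials -/

theorem totalDegree_pderiv_lt {σ : Type*} {n : ℕ} (hn : 0 < n) (p : MvPolynomial σ ℝ)
    (hp : p.totalDegree ≤ n) (i : σ) : (MvPolynomial.pderiv i p).totalDegree < n := by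
  classical
  have h1 : MvPolynomial.pderiv i p =
      ∑ s ∈ p.support, MvPolynomial.pderiv i (MvPolynomial.monomial s (p.coeff s)) := by
    conv_lhs => rw [p.as_sum]
    rw [map_sum]
  rw [h1]
  refine lt_of_le_of_lt (MvPolynomial.totalDegree_finsetSum_le (d := n - 1) fun s hs => ?_)
    (by omega)
  rw [MvPolynomial.pderiv_monomial]
  by_cases hi : s i = 0
  · simp [hi]
  · refine (MvPolynomial.totalDegree_monomial_le _ _).trans ?_
    have h2 : s.degree ≤ n := (MvPolynomial.le_totalDegree hs).trans hp
    have h3 : s - Finsupp.single i 1 + Finsupp.single i 1 = s :=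
      tsub_add_cancel_of_le (by simpa using Nat.one_le_iff_ne_zero.mpr hi)
    have h4 := congrArg Finsupp.degree h3
    rw [map_add, Finsupp.degree_single] at h4
    change (s - Finsupp.single i 1).degree ≤ _
    omega

theorem hasDerivAt_eval_line {d : ℕ} (p : MvPolynomial (Fin d) ℝ) (x : Fin d → ℝ) (i : Fin d) :
    HasDerivAt (fun t : ℝ => MvPolynomial.eval (x + t • Pi.single i 1) p)
      (MvPolynomial.eval x (MvPolynomial.pderiv i p)) 0 := by
  induction p using MvPolynomial.induction_on with
  | C a => simpa using hasDerivAt_const (0 : ℝ) a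
  | add p q hp hq =>
    simp only [map_add]
    exact hp.add hq
  | mul_X p j hp =>
    have hX : HasDerivAt (fun t : ℝ => x j + t * (Pi.single i 1 : Fin d → ℝ) j)
        ((Pi.single i 1 : Fin d → ℝ) j) 0 := by
      simpa using
        ((hasDerivAt_id (0 : ℝ)).mul_const ((Pi.single i 1 : Fin d → ℝ) j)).const_add (x j)
    have h := HasDerivAt.fun_mul hp hX
    have hval : MvPolynomial.eval x (MvPolynomial.pderiv i (p * MvPolynomial.X j)) =
        MvPolynomial.eval x (MvPolynomial.pderiv i p) * x j +
          MvPolynomial.eval x p * (Pi.single i 1 : Fin d → ℝ) j := by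
      by_cases hij : j = i
      · subst hij
        simp
        ring
      · simp [MvPolynomial.pderiv_X_of_ne hij, Pi.single_eq_of_ne hij, mul_comm]
    rw [hval]
    simpa using h

open Filter Topology in
/-- A positive value of `P` in a bounded open set, together with `P = 0` on the frontier, forces an
interior local maximum, and this persists under small perturbations of `P`. -/
theorem eventually_exists_isLocalMax {X : Type*} [MetricSpace X] [ProperSpace X] {U : Set X}
    (hU : IsOpen U) (hb : Bornology.IsBounded U) {P H : X → ℝ} (hP : Continuous P)
    (hH : Continuous H) (hfr : ∀ x ∈ frontier U, P x = 0) {a : X} (ha : a ∈ U) (hPa : 0 < P a) :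
    ∀ᶠ ε in 𝓝[>] (0 : ℝ), ∃ x ∈ U, IsLocalMax (fun y => P y + ε * H y) x := by
  have hK : IsCompact (closure U) := hb.isCompact_closure
  obtain ⟨B, hB⟩ := hK.exists_bound_of_continuousOn hH.continuousOn
  have hB0 : 0 ≤ B := (norm_nonneg _).trans (hB a (subset_closure ha))
  have hsmall : ∀ᶠ ε in 𝓝[>] (0 : ℝ), 2 * (ε * B) < P a := by
    have : Tendsto (fun ε : ℝ => 2 * (ε * B)) (𝓝[>] 0) (𝓝 (2 * (0 * B))) :=
      (Continuous.tendsto (by fun_prop) 0).mono_left nhdsWithin_le_nhds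
    exact this.eventually_lt_const (by simpa using hPa)
  filter_upwards [hsmall, self_mem_nhdsWithin] with ε hε hpos
  have hpos : 0 < ε := hpos
  obtain ⟨x, hx, hmax⟩ := hK.exists_isMaxOn ⟨a, subset_closure ha⟩
    (f := fun y => P y + ε * H y) (by fun_prop)
  have hxU : x ∈ U := by
    by_contra hxU
    have hPx := hfr x (hU.frontier_eq ▸ ⟨hx, hxU⟩)
    have h1 : P a + ε * H a ≤ P x + ε * H x := hmax (subset_closure ha)
    have h2 := mul_le_mul_of_nonneg_left (abs_le.mp (hB x hx)).2 hpos.le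
    have h3 := mul_le_mul_of_nonneg_left (abs_le.mp (hB a (subset_closure ha))).1 hpos.le
    linarith
  exact ⟨x, hxU, hmax.isLocalMax (mem_of_superset (hU.mem_nhds hxU) subset_closure)⟩

theorem continuous_eval_euclidean {d : ℕ} (p : MvPolynomial (Fin d) ℝ) :
    Continuous fun x : EuclideanSpace ℝ (Fin d) => MvPolynomial.eval (fun i => x i) p :=
  (MvPolynomial.continuous_eval p).comp (by fun_prop)

theorem eval_pderiv_eq_zero_of_isLocalExtr {d : ℕ} (p : MvPolynomial (Fin d) ℝ)
    {x : EuclideanSpace ℝ (Fin d)}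
    (hx : IsLocalExtr (fun y : EuclideanSpace ℝ (Fin d) => MvPolynomial.eval (fun i => y i) p) x)
    (i : Fin d) : MvPolynomial.eval (fun k => x k) (MvPolynomial.pderiv i p) = 0 := by
  have hline : IsLocalExtr ((fun y : EuclideanSpace ℝ (Fin d) =>
      MvPolynomial.eval (fun i => y i) p) ∘
      fun t : ℝ => x + t • EuclideanSpace.single i (1 : ℝ)) 0 :=
    IsLocalExtr.comp_continuous (by simpa using hx) (by fun_prop)
  refine hline.hasDerivAt_eq_zero ?_
  have hfun : ((fun y : EuclideanSpace ℝ (Fin d) => MvPolynomial.eval (fun i => y i) p) ∘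
      fun t : ℝ => x + t • EuclideanSpace.single i (1 : ℝ)) =
      fun t : ℝ => MvPolynomial.eval ((fun k => x k) + t • Pi.single i 1) p := by
    funext t
    simp only [Function.comp_apply]
    congr 2
  rw [hfun]
  exact hasDerivAt_eval_line p (fun k => x k) i

/-! ### Counting cells -/

open Filter Topology in
/-- Disjoint bounded open cells, on whose frontiers a polynomial of degree at most `n` vanishes but
in each of which it is somewhere nonzero, number at most `n ^ d`: a perturbation with diagonal
gradient system has a critical point in each of them. -/
theorem card_le_pow_of_bounded_cells {ι : Type*} [Fintype ι] {d n : ℕ} (hn : 0 < n)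
    (p : MvPolynomial (Fin d) ℝ) (hp : p.totalDegree ≤ n)
    (U : ι → Set (EuclideanSpace ℝ (Fin d))) (hopen : ∀ j, IsOpen (U j))
    (hbdd : ∀ j, Bornology.IsBounded (U j)) (hdisj : Pairwise (Function.onFun Disjoint U))
    (hfr : ∀ j, ∀ x ∈ frontier (U j), MvPolynomial.eval (fun i => x i) p = 0)
    (hne : ∀ j, ∃ a ∈ U j, MvPolynomial.eval (fun i => a i) p ≠ 0) :
    Fintype.card ι ≤ n ^ d := by
  classical
  set h : MvPolynomial (Fin d) ℝ := ∑ k, MvPolynomial.X k ^ (n + 1) with hh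
  have hpc := continuous_eval_euclidean p
  have hhc := continuous_eval_euclidean h
  -- The two signs of `p` in a cell lead to local maxima and local minima respectively.
  have hev : ∀ᶠ ε in 𝓝[>] (0 : ℝ), ∀ j, ∃ x ∈ U j,
      IsLocalExtr (fun y : EuclideanSpace ℝ (Fin d) =>
        MvPolynomial.eval (fun i => y i) (p + MvPolynomial.C ε * h)) x := by
    refine eventually_all.2 fun j => ?_
    obtain ⟨a, ha, hpa⟩ := hne j
    rcases hpa.lt_or_gt with hneg | hpos
    · filter_upwards [eventually_exists_isLocalMax (hopen j) (hbdd j) hpc.neg hhc.neg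
        (fun x hx => by simp [hfr j x hx]) ha (by simpa using hneg)] with ε ⟨x, hx, hmax⟩
      refine ⟨x, hx, Or.inl ?_⟩
      have hmin := hmax.neg
      simp only [Pi.neg_apply] at hmin
      have hfun : (fun y : EuclideanSpace ℝ (Fin d) =>
          MvPolynomial.eval (fun i => y i) (p + MvPolynomial.C ε * h)) =
          fun y => -(-MvPolynomial.eval (fun i => y i) p +
            ε * -MvPolynomial.eval (fun i => y i) h) := by
        funext y
        simp only [map_add, map_mul, MvPolynomial.eval_C]
        ring
      rw [hfun]
      exact hmin
    · filter_upwards [eventually_exists_isLocalMax (hopen j) (hbdd j) hpc hhc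
        (hfr j) ha hpos] with ε ⟨x, hx, hmax⟩
      refine ⟨x, hx, Or.inr ?_⟩
      simp only [map_add, map_mul, MvPolynomial.eval_C]
      exact hmax
  obtain ⟨ε, hε, hpos⟩ := (hev.and self_mem_nhdsWithin).exists
  have hpos : 0 < ε := hpos
  choose z hzU hz using hε
  refine card_le_pow_of_diagonal_system (c := ε * (n + 1)) (by positivity)
    (fun i => MvPolynomial.pderiv i p) (totalDegree_pderiv_lt hn p hp)
    (fun j k => z j k) (fun j k hjk => ?_) fun j i => ?_
  · by_contra hne
    have hzz : z j = z k := by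
      ext i
      exact congrFun hjk i
    exact Set.disjoint_left.mp (hdisj hne) (hzU j) (hzz ▸ hzU k)
  · have h0 := eval_pderiv_eq_zero_of_isLocalExtr _ (hz j) i
    have hX : ∀ k, MvPolynomial.eval (fun l => z j l) (MvPolynomial.pderiv i
        (MvPolynomial.X k ^ (n + 1) : MvPolynomial (Fin d) ℝ)) =
        if k = i then ((n : ℝ) + 1) * z j i ^ n else 0 := by
      intro k
      split_ifs with hk
      · subst hk
        simp
      · simp [MvPolynomial.pderiv_X_of_ne hk]
    rw [map_add, MvPolynomial.pderiv_C_mul, map_add, map_mul, MvPolynomial.eval_C, hh,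
      map_sum, map_sum, Finset.sum_congr rfl fun k _ => hX k, Finset.sum_ite_eq' Finset.univ i] at h0
    simp only [Finset.mem_univ, if_true] at h0
    linarith

/-- Truncating the components of `{f ≠ 0}` by a ball and multiplying `f` by the equation of the
sphere, of degree two, reduces the count to bounded cells. -/
theorem card_components_le {d : ℕ} (f : MvPolynomial (Fin d) ℝ) :
    ∀ T : Finset (ConnectedComponents
      ↥{x : EuclideanSpace ℝ (Fin d) | MvPolynomial.eval (fun i => x i) f ≠ 0}),
    T.card ≤ (f.totalDegree + 2) ^ d := by
  classical
  set X : Set (EuclideanSpace ℝ (Fin d)) := {x | MvPolynomial.eval (fun i => x i) f ≠ 0} with hX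
  intro T
  have hXo : IsOpen X := isOpen_ne_fun (continuous_eval_euclidean f) continuous_const
  have : LocallyConnectedSpace X := hXo.locallyConnectedSpace
  -- `Ω c` is the component `c` viewed as a subset of the ambient space.
  let Ω : ConnectedComponents X → Set (EuclideanSpace ℝ (Fin d)) := fun c =>
    Subtype.val '' (ConnectedComponents.mk ⁻¹' {c} : Set X)
  have hΩo : ∀ c, IsOpen (Ω c) := by
    intro c
    obtain ⟨x, rfl⟩ := ConnectedComponents.surjective_coe c
    refine hXo.isOpenMap_subtype_val _ ?_
    rw [connectedComponents_preimage_singleton]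
    exact isOpen_connectedComponent
  have hΩeq : ∀ c c' x, x ∈ Ω c → x ∈ Ω c' → c = c' := by
    rintro c c' _ ⟨x, hx, rfl⟩ ⟨y, hy, hxy⟩
    obtain rfl := Subtype.ext hxy
    exact hx.symm.trans hy
  choose a ha using (ConnectedComponents.surjective_coe : Function.Surjective
    (ConnectedComponents.mk : X → ConnectedComponents X))
  obtain ⟨R, hR0, hR⟩ : ∃ R : ℝ, 0 < R ∧ ∀ c ∈ T, ‖(a c : EuclideanSpace ℝ (Fin d))‖ < R := by
    refine ⟨∑ c ∈ T, ‖(a c : EuclideanSpace ℝ (Fin d))‖ + 1, by positivity, fun c hc => ?_⟩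
    have := Finset.single_le_sum (f := fun c => ‖(a c : EuclideanSpace ℝ (Fin d))‖)
      (fun _ _ => norm_nonneg _) hc
    linarith
  let q : MvPolynomial (Fin d) ℝ := MvPolynomial.C (R ^ 2) - ∑ i, MvPolynomial.X i ^ 2
  have hq : ∀ x : EuclideanSpace ℝ (Fin d),
      MvPolynomial.eval (fun i => x i) q = R ^ 2 - ‖x‖ ^ 2 := by
    intro x
    simp [q, EuclideanSpace.norm_sq_eq]
  have hqdeg : q.totalDegree ≤ 2 := by
    refine (MvPolynomial.totalDegree_sub _ _).trans (max_le ((MvPolynomial.totalDegree_C _).trans_le (by omega)) ?_)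
    exact MvPolynomial.totalDegree_finsetSum_le fun i _ => by simp
  have hmain := card_le_pow_of_bounded_cells (ι := T) (n := f.totalDegree + 2) (by omega) (f * q)
    ((MvPolynomial.totalDegree_mul _ _).trans (by omega))
    (fun c => Ω c ∩ Metric.ball 0 R) (fun c => (hΩo c).inter Metric.isOpen_ball)
    (fun c => Metric.isBounded_ball.subset Set.inter_subset_right) ?_ ?_ ?_
  · simpa using hmain
  · intro c c' hcc
    refine Set.disjoint_left.mpr fun x hx hx' => hcc (Subtype.ext (hΩeq _ _ x hx.1 hx'.1))
  · intro c x hx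
    rw [map_mul, hq]
    by_contra hne
    have hfx : x ∈ X := left_ne_zero_of_mul hne
    have hRx : R ^ 2 - ‖x‖ ^ 2 ≠ 0 := right_ne_zero_of_mul hne
    -- A frontier point off the sphere and off the zero set of `f` lies in some open component,
    -- which must then be `Ω c`, so the point is interior to the cell.
    have hxcl := hx.1
    have hle : ‖x‖ ≤ R := by
      have := Metric.closure_ball_subset_closedBall (closure_mono Set.inter_subset_right hxcl)
      simpa using this
    have hlt : ‖x‖ < R := lt_of_le_of_ne hle fun h => hRx (by rw [h]; ring)
    have hxΩ : x ∈ Ω (ConnectedComponents.mk ⟨x, hfx⟩) := ⟨⟨x, hfx⟩, rfl, rfl⟩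
    obtain ⟨y, hy, hy'⟩ := mem_closure_iff.mp (closure_mono Set.inter_subset_left hxcl) _
      (hΩo _) hxΩ
    rw [hΩeq _ _ y hy hy'] at hxΩ
    refine hx.2 ?_
    rw [((hΩo c).inter Metric.isOpen_ball).interior_eq]
    exact ⟨hxΩ, by simpa using hlt⟩
  · intro c
    have hac := hR c c.2
    refine ⟨a c, ⟨⟨a c, ha c, rfl⟩, by simpa using hac⟩, ?_⟩
    rw [map_mul, hq]
    refine mul_ne_zero (a c).2 (ne_of_gt ?_)
    have := norm_nonneg (a c : EuclideanSpace ℝ (Fin d))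
    nlinarith

/-! ### Degree one -/

theorem eval_affine_combination {d : ℕ} {f : MvPolynomial (Fin d) ℝ} (hf : f.totalDegree ≤ 1)
    (x y : Fin d → ℝ) {a b : ℝ} (hab : a + b = 1) :
    MvPolynomial.eval (a • x + b • y) f =
      a * MvPolynomial.eval x f + b * MvPolynomial.eval y f := by
  simp only [MvPolynomial.eval_eq, Finset.mul_sum]
  rw [← Finset.sum_add_distrib]
  refine Finset.sum_congr rfl fun s hs => ?_
  have hs1 : s.degree ≤ 1 := (MvPolynomial.le_totalDegree hs).trans hf
  rcases Nat.le_one_iff_eq_zero_or_eq_one.mp hs1 with h0 | h1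
  · rw [Finsupp.degree_eq_zero_iff] at h0
    subst h0
    simp only [Finsupp.support_zero, Finset.prod_empty]
    linear_combination (- f.coeff 0) * hab
  · obtain ⟨i, rfl⟩ : s ∈ Set.range fun i : Fin d => Finsupp.single i 1 := by
      rw [Finsupp.range_single_one]; exact h1
    simp
    ring

/-- If `f` is affine, both `{f > 0}` and `{f < 0}` are convex, hence each lies in one component. -/
theorem card_components_le_two {d : ℕ} (f : MvPolynomial (Fin d) ℝ) (hf : f.totalDegree ≤ 1) :
    ∀ T : Finset (ConnectedComponents
      ↥{x : EuclideanSpace ℝ (Fin d) | MvPolynomial.eval (fun i => x i) f ≠ 0}),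
    T.card ≤ 2 := by
  classical
  set X : Set (EuclideanSpace ℝ (Fin d)) := {x | MvPolynomial.eval (fun i => x i) f ≠ 0} with hX
  intro T
  have hsame : ∀ σ : ℝ, ∀ x y : X, 0 < σ * MvPolynomial.eval (fun i => x.1 i) f →
      0 < σ * MvPolynomial.eval (fun i => y.1 i) f →
      ConnectedComponents.mk x = ConnectedComponents.mk y := by
    intro σ x y hx hy
    have hconv : Convex ℝ {z : EuclideanSpace ℝ (Fin d) |
        0 < σ * MvPolynomial.eval (fun i => z i) f} := by
      intro u hu v hv a b ha hb hab
      have hu : 0 < σ * MvPolynomial.eval (fun i => u i) f := hu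
      have hv : 0 < σ * MvPolynomial.eval (fun i => v i) f := hv
      have h := eval_affine_combination hf (fun i => u i) (fun i => v i) hab
      change 0 < σ * MvPolynomial.eval (a • (fun i => u i) + b • (fun i => v i)) f
      rw [h]
      rcases ha.eq_or_lt with rfl | ha
      · have : b = 1 := by linarith
        subst this
        linarith
      · nlinarith [mul_pos ha hu, mul_nonneg hb hv.le]
    have hpre : IsPreconnected (Subtype.val ⁻¹' {z : EuclideanSpace ℝ (Fin d) |
        0 < σ * MvPolynomial.eval (fun i => z i) f} : Set X) := by
      rw [← Topology.IsInducing.subtypeVal.isPreconnected_image, Subtype.image_preimage_coe,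
        Set.inter_eq_right.mpr]
      · exact hconv.isPreconnected
      · intro z hz
        exact right_ne_zero_of_mul (ne_of_gt hz)
    refine ConnectedComponents.coe_eq_coe'.mpr ?_
    exact hpre.subset_connectedComponent hy hx
  choose a ha using (ConnectedComponents.surjective_coe : Function.Surjective
    (ConnectedComponents.mk : X → ConnectedComponents X))
  -- A component is determined by the sign of `f` on it.
  have hinj : Function.Injective fun c : ConnectedComponents X =>
      decide (0 < MvPolynomial.eval (fun i => (a c).1 i) f) := by
    intro c c' h
    rw [← ha c, ← ha c']
    simp only [decide_eq_decide] at h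
    by_cases hc : 0 < MvPolynomial.eval (fun i => (a c).1 i) f
    · exact hsame 1 _ _ (by simpa using hc) (by simpa using h.mp hc)
    · have hc' := mt h.mpr hc
      have h1 := lt_of_le_of_ne (not_lt.mp hc) (a c).2
      have h2 := lt_of_le_of_ne (not_lt.mp hc') (a c').2
      exact hsame (-1) _ _ (by simpa using h1) (by simpa using h2)
  simpa using Finset.card_le_card_of_injOn (t := (Finset.univ : Finset Bool)) _
    (fun _ _ => Finset.mem_univ _) (hinj.injOn (s := (T : Set (ConnectedComponents X))))

/-! ### The bound -/

theorem finite_and_card_le_of_finset_card_le {α : Type*} {N : ℕ}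
    (h : ∀ T : Finset α, T.card ≤ N) : Finite α ∧ Nat.card α ≤ N := by
  have hfin : Finite α := by
    by_contra hinf
    rw [not_finite_iff_infinite] at hinf
    obtain ⟨T, hT⟩ := Infinite.exists_subset_card_eq α (N + 1)
    have := h T
    omega
  refine ⟨hfin, ?_⟩
  have := Fintype.ofFinite α
  rw [Nat.card_eq_fintype_card]
  exact h Finset.univ

theorem warren_components_bound (d : ℕ) (f : MvPolynomial (Fin d) ℝ) (D : ℕ)
    (hf : f ≠ 0) (hdeg : f.totalDegree = D) (hD : 1 ≤ D) :
    Finite (ConnectedComponents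
      ↥{x : EuclideanSpace ℝ (Fin d) | MvPolynomial.eval (fun i => x i) f ≠ 0}) ∧
    Nat.card (ConnectedComponents
      ↥{x : EuclideanSpace ℝ (Fin d) | MvPolynomial.eval (fun i => x i) f ≠ 0})
      ≤ 6 * (2 * D) ^ d := by
  refine finite_and_card_le_of_finset_card_le fun T => ?_
  rcases hD.eq_or_lt with h1 | h2
  · have hT := card_components_le_two f (by omega) T
    have : 0 < (2 * D) ^ d := by positivity
    omega
  · calc T.card ≤ (f.totalDegree + 2) ^ d := card_components_le f T
      _ ≤ (2 * D) ^ d := Nat.pow_le_pow_left (by omega) d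
      _ ≤ 6 * (2 * D) ^ d := by omega
end

section
/- There exists an absolute constant C ≥ 1 such that the following holds. Let f be an irreducible real polynomial in three variables of total degree D ≥ 1, let E ≥ D be a natural number, and let Q be a finite set of points in ℝ³. Then there exists a nonzero polynomial g ∈ ℝ[x,y,z] of total degree at most E such that f and g have no common nonconstant factor, and every connected component of ℝ³ \ Z(g) contains at most C · |Q| / (D · E²) points of Q. -/
/-!
The proof is polynomial partitioning: bisect repeatedly, with polynomials chosen outside the ideal
`(f)`. Some variable `x_i` occurs in `f` with degree at least `D / 3`, and no nonzero polynomial of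
smaller degree in `x_i` is divisible by `f`. Hence the polynomials of degree at most `3 t` contain a
space of dimension about `min (D, t) t²` meeting `(f)` only in `0`. The ham sandwich theorem in such
spaces bisects `2 ^ j` sets at step `j`, for `j < J`, with `2 ^ J` comparable to `D E²`; the degrees
used grow geometrically, so their sum is at most `E` (`exists_degrees`). The product `g` of the
bisecting polynomials is prime to `f`, and on a component of its nonvanishing set the sign vector is
constant, so the component meets at most `|Q| / 2 ^ J` points (`exists_partition`).

The ham sandwich theorem rests on a Borsuk–Ulam theorem, proved algebraically for odd polynomial maps
`f_1, …, f_n` in `n + 1` variables. Add to `f_i` a small multiple of `x_i ^ (2K+1)`, of larger degree,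
and the equation `x_0 ^ 6 + ∑ x_j ^ 2 = 1`. The resulting ideal has a monomial basis for its quotient
(`redMap_bijective`), whose even part has odd dimension `3 (2K+1) ^ n`. Commuting operators on a real
space of odd dimension have a common eigenvector (`exists_common_eigenvector`); applied to
multiplication by the products `x_i x_j`, this gives a real solution up to sign (`exists_real_zero`).
Approximating the sign function by odd polynomials and using compactness yields the discrete ham
sandwich theorem.
-/

open scoped Classical
open MvPolynomial

/-! ### Commuting operators in odd dimension -/

lemma odd_real_root {p : Polynomial ℝ} (hp : Odd p.natDegree) : ∃ x, p.IsRoot x := by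
  by_contra hno
  push Not at hno
  have key : ∀ q : Polynomial ℝ, q ∣ p → q ≠ 0 → Even q.natDegree := by
    intro q
    induction q using WfDvdMonoid.induction_on_irreducible with
    | zero => simp
    | unit u hu => intro _ _; rw [Polynomial.natDegree_eq_zero_of_isUnit hu]; simp
    | mul a i ha hi ih =>
      intro hd h0
      rw [Polynomial.natDegree_mul hi.ne_zero ha]
      refine Even.add ?_ (ih ((dvd_mul_left _ _).trans hd) ha)
      have h2 := hi.natDegree_le_two
      have h1 : 0 < i.natDegree := hi.natDegree_pos
      have h3 : i.natDegree ≠ 1 := by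
        intro h
        obtain ⟨x, hx⟩ := Polynomial.exists_root_of_degree_eq_one
          ((Polynomial.degree_eq_iff_natDegree_eq_of_pos one_pos).2 h)
        exact hno x (Polynomial.IsRoot.dvd hx ((dvd_mul_right _ _).trans hd))
      have : i.natDegree = 2 := by omega
      rw [this]; simp
  have h0 : p ≠ 0 := by rintro rfl; simp at hp
  exact (Nat.not_even_iff_odd.2 hp) (key p dvd_rfl h0)

/-- Commuting operators on an odd-dimensional real vector space have a common eigenvector. If some
`T i` is not scalar and `a` is a real eigenvalue of it, the kernel and the range of `T i - a` are
proper invariant subspaces whose dimensions have odd sum, so one of them has odd dimension. -/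
theorem exists_common_eigenvector {κ : Type*} :
    ∀ (n : ℕ) {V : Type*} [AddCommGroup V] [Module ℝ V] [FiniteDimensional ℝ V]
      (T : κ → Module.End ℝ V), Module.finrank ℝ V = n → Odd n →
      (∀ i j, Commute (T i) (T j)) →
      ∃ v : V, v ≠ 0 ∧ ∃ l : κ → ℝ, ∀ i, T i v = l i • v := by
  intro n
  induction n using Nat.strong_induction_on with
  | _ n ih =>
  intro V _ _ _ T hn hodd hc
  by_cases hs : ∀ i, ∃ a : ℝ, T i = algebraMap ℝ (Module.End ℝ V) a
  · choose a ha using hs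
    have : Nontrivial V := Module.nontrivial_of_finrank_pos (R := ℝ) (by rw [hn]; exact hodd.pos)
    obtain ⟨v, hv⟩ := exists_ne (0 : V)
    exact ⟨v, hv, a, fun i => by rw [ha]; simp⟩
  · push Not at hs
    obtain ⟨i, hi⟩ := hs
    obtain ⟨a, ha⟩ := odd_real_root (p := (T i).charpoly)
      (by rw [LinearMap.charpoly_natDegree, hn]; exact hodd)
    have hev := (Module.End.hasEigenvalue_iff_isRoot_charpoly _ _).2 ha
    set S : Module.End ℝ V := T i - algebraMap ℝ (Module.End ℝ V) a with hS
    have hcS : ∀ j, Commute S (T j) := fun j => (hc i j).sub_left (Algebra.commutes a (T j))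
    have hker : 0 < Module.finrank ℝ (LinearMap.ker S) := by
      obtain ⟨v, hv⟩ := hev.exists_hasEigenvector
      have hv0 : v ∈ LinearMap.ker S := by
        simp [hS, hv.apply_eq_smul]
      rw [Module.finrank_pos_iff]
      exact ⟨⟨⟨v, hv0⟩, 0, fun h => hv.2 (by simpa using congrArg Subtype.val h)⟩⟩
    have hran : 0 < Module.finrank ℝ (LinearMap.range S) := by
      rw [Nat.pos_iff_ne_zero]
      intro h
      rw [Submodule.finrank_eq_zero, LinearMap.range_eq_bot] at h
      exact hi a (sub_eq_zero.1 h)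
    have hsum := LinearMap.finrank_range_add_finrank_ker S
    have main : ∀ W : Submodule ℝ V, Odd (Module.finrank ℝ W) → Module.finrank ℝ W < n →
        (∀ j, ∀ w ∈ W, T j w ∈ W) →
        ∃ v : V, v ≠ 0 ∧ ∃ l : κ → ℝ, ∀ i, T i v = l i • v := by
      intro W hW hlt hinv
      obtain ⟨v, hv, l, hl⟩ := ih _ hlt (V := W) (fun j => (T j).restrict (hinv j)) rfl hW
        (fun j k => by
          ext w
          have := LinearMap.congr_fun (hc j k) (w : V)
          simpa using this)
      refine ⟨v, by simpa using hv, l, fun j => ?_⟩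
      simpa using congrArg Subtype.val (hl j)
    rcases Nat.even_or_odd (Module.finrank ℝ (LinearMap.ker S)) with he | ho
    · refine main (LinearMap.range S) ?_ (by omega) ?_
      · rw [← hn, ← hsum] at hodd
        exact (Nat.odd_add.1 hodd).2 he
      · rintro j _ ⟨u, rfl⟩
        exact ⟨T j u, LinearMap.congr_fun (hcS j) u⟩
    · refine main _ ho (by omega) ?_
      intro j w hw
      have := LinearMap.congr_fun (hcS j) w
      simp only [Module.End.mul_apply, LinearMap.mem_ker.1 hw, map_zero] at this
      exact this

/-! ### Polynomials with prescribed leading forms -/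

/-- The polynomials all of whose monomials have total degree strictly below `N`; it is `0` for
`N = 0`. -/
noncomputable def degLT (σ : Type*) (N : ℕ) : Submodule ℝ (MvPolynomial σ ℝ) :=
  restrictSupport ℝ {m | m.degree < N}

lemma mem_degLT {σ : Type*} {N : ℕ} {p : MvPolynomial σ ℝ} :
    p ∈ degLT σ N ↔ ∀ m ∈ p.support, m.degree < N := by
  simp only [degLT, mem_restrictSupport_iff]; rfl

lemma degLT_mono {σ : Type*} {M N : ℕ} (h : M ≤ N) : degLT σ M ≤ degLT σ N :=
  restrictSupport_mono _ (fun _ hm => lt_of_lt_of_le hm h)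

lemma degLT_mul {σ : Type*} {a b : ℕ} {p q : MvPolynomial σ ℝ} (hp : p ∈ degLT σ (a + 1))
    (hq : q ∈ degLT σ b) : p * q ∈ degLT σ (a + b) := by
  rw [mem_degLT] at *
  intro m hm
  obtain ⟨u, hu, v, hv, rfl⟩ := Finset.mem_add.1 (support_mul p q hm)
  have h1 := hp u hu
  have h2 := hq v hv
  rw [map_add]; omega

lemma mem_degLT_of_totalDegree {σ : Type*} {N : ℕ} {p : MvPolynomial σ ℝ}
    (h : p.totalDegree < N) : p ∈ degLT σ N := by
  rw [mem_degLT]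
  intro m hm
  exact lt_of_le_of_lt (le_totalDegree hm) h

lemma degLT_zero {σ : Type*} {p : MvPolynomial σ ℝ} (h : p ∈ degLT σ 0) : p = 0 := by
  rw [mem_degLT] at h
  rw [← support_eq_empty, Finset.eq_empty_iff_forall_notMem]
  intro m hm
  exact absurd (h m hm) (by simp)

/-- `Near d u v`: `v` has degree at most `d` and `u`, `v` agree up to terms of degree below `d`. -/
def Near {σ : Type*} (d : ℕ) (u v : MvPolynomial σ ℝ) : Prop :=
  u - v ∈ degLT σ d ∧ v ∈ degLT σ (d + 1)

lemma Near.mul {σ : Type*} {d d' : ℕ} {u v u' v' : MvPolynomial σ ℝ}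
    (h : Near d u v) (h' : Near d' u' v') : Near (d + d') (u * u') (v * v') := by
  have hu' : u' ∈ degLT σ (d' + 1) := by
    have := (degLT σ (d' + 1)).add_mem (degLT_mono (Nat.le_succ d') h'.1) h'.2
    simpa using this
  refine ⟨?_, ?_⟩
  · have e : u * u' - v * v' = u' * (u - v) + v * (u' - v') := by ring
    rw [e]
    refine (degLT σ _).add_mem ?_ (degLT_mul h.2 h'.1)
    rw [add_comm]
    exact degLT_mul hu' h.1
  · rw [add_assoc]
    exact degLT_mul h.2 h'.2

lemma Near.one {σ : Type*} : Near 0 (1 : MvPolynomial σ ℝ) 1 :=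
  ⟨by simp, mem_degLT_of_totalDegree (by simp)⟩

lemma Near.pow {σ : Type*} {d : ℕ} {u v : MvPolynomial σ ℝ} (h : Near d u v) (k : ℕ) :
    Near (d * k) (u ^ k) (v ^ k) := by
  induction k with
  | zero => simpa using Near.one
  | succ k ih => rw [pow_succ, pow_succ, Nat.mul_succ]; exact ih.mul h

lemma Near.prod {σ ι : Type*} (s : Finset ι) {d : ι → ℕ} {u v : ι → MvPolynomial σ ℝ}
    (h : ∀ i, Near (d i) (u i) (v i)) :
    Near (∑ i ∈ s, d i) (∏ i ∈ s, u i) (∏ i ∈ s, v i) := by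
  induction s using Finset.induction_on with
  | empty => simpa using Near.one
  | insert a s ha ih =>
    rw [Finset.sum_insert ha, Finset.prod_insert ha, Finset.prod_insert ha]
    exact (h a).mul ih

lemma near_X {σ : Type*} (i : σ) : Near 1 (X i : MvPolynomial σ ℝ) (X i) :=
  ⟨by simp, mem_degLT_of_totalDegree (by simp)⟩

/-- The linear endomorphism sending a monomial `∏ Xᵢ ^ (aᵢ + eᵢ bᵢ)` with `aᵢ < eᵢ` to
`∏ Xᵢ ^ aᵢ Gᵢ ^ bᵢ`. It is the identity up to lower degree terms when each `Gᵢ` has leading form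
`Xᵢ ^ eᵢ`, and it turns multiplication by `Xᵢ ^ eᵢ` into multiplication by `Gᵢ`. -/
noncomputable def redMap {σ : Type*} [Fintype σ] (e : σ → ℕ) (G : σ → MvPolynomial σ ℝ) :
    MvPolynomial σ ℝ →ₗ[ℝ] MvPolynomial σ ℝ :=
  (basisMonomials σ ℝ).constr ℝ (fun m => ∏ i, (X i ^ (m i % e i) * G i ^ (m i / e i)))

lemma redMap_monomial {σ : Type*} [Fintype σ] (e : σ → ℕ) (G : σ → MvPolynomial σ ℝ) (m : σ →₀ ℕ) :
    redMap e G (monomial m 1) = ∏ i, (X i ^ (m i % e i) * G i ^ (m i / e i)) := by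
  exact (basisMonomials σ ℝ).constr_basis ℝ _ m

lemma monomial_eq_univ_prod {σ : Type*} [Fintype σ] (m : σ →₀ ℕ) : (monomial m 1 : MvPolynomial σ ℝ) = ∏ i, X i ^ m i := by
  rw [monomial_eq, C_1, one_mul, Finsupp.prod_fintype]; simp

lemma redMap_sub_monomial {σ : Type*} [Fintype σ] {e : σ → ℕ} {G : σ → MvPolynomial σ ℝ}
    (hG : ∀ i, Near (e i) (G i) (X i ^ e i)) (m : σ →₀ ℕ) :
    redMap e G (monomial m 1) - monomial m 1 ∈ degLT σ m.degree := by
  rw [redMap_monomial, monomial_eq_univ_prod, Finsupp.degree_eq_sum]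
  refine (Near.prod (d := fun i => m i) Finset.univ (fun i => ?_)).1
  have := ((near_X i).pow (m i % e i)).mul ((hG i).pow (m i / e i))
  rwa [← pow_mul, ← pow_add, one_mul, Nat.mod_add_div] at this

lemma redMap_sub {σ : Type*} [Fintype σ] {e : σ → ℕ} {G : σ → MvPolynomial σ ℝ}
    (hG : ∀ i, Near (e i) (G i) (X i ^ e i)) {N : ℕ} {p : MvPolynomial σ ℝ}
    (hp : p ∈ degLT σ (N + 1)) : redMap e G p - p ∈ degLT σ N := by
  have : redMap e G p - p = ∑ m ∈ p.support,
      p.coeff m • (redMap e G (monomial m 1) - monomial m 1) := by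
    conv_lhs => rw [p.as_sum]
    rw [map_sum, ← Finset.sum_sub_distrib]
    refine Finset.sum_congr rfl fun m _ => ?_
    rw [smul_sub, ← map_smul, smul_monomial, smul_eq_mul, mul_one]
  rw [this]
  refine (degLT σ N).sum_mem fun m hm => (degLT σ N).smul_mem _ ?_
  exact degLT_mono (Nat.lt_succ_iff.1 (mem_degLT.1 hp m hm)) (redMap_sub_monomial hG m)

/-- As `redMap e G` differs from the identity by a degree-lowering map, it is bijective; this plays
the role of a Gröbner basis computation for the ideal generated by the `G i`. -/
lemma redMap_bijective {σ : Type*} [Fintype σ] {e : σ → ℕ} {G : σ → MvPolynomial σ ℝ}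
    (hG : ∀ i, Near (e i) (G i) (X i ^ e i)) : Function.Bijective (redMap e G) := by
  have inj : ∀ N : ℕ, ∀ p ∈ degLT σ N, redMap e G p = 0 → p = 0 := by
    intro N
    induction N with
    | zero => intro p hp _; exact degLT_zero hp
    | succ N ih =>
      intro p hp h
      refine ih p ?_ h
      have := redMap_sub hG hp
      rw [h, zero_sub] at this
      simpa using this
  have surj : ∀ N : ℕ, ∀ p ∈ degLT σ N, ∃ q, redMap e G q = p := by
    intro N
    induction N with
    | zero => intro p hp; exact ⟨0, by rw [degLT_zero hp, map_zero]⟩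
    | succ N ih =>
      intro p hp
      obtain ⟨q, hq⟩ := ih _ (redMap_sub hG hp)
      exact ⟨p - q, by rw [map_sub, hq]; abel⟩
  constructor
  · rw [injective_iff_map_eq_zero]
    intro p
    exact inj (p.totalDegree + 1) p (mem_degLT_of_totalDegree (Nat.lt_succ_self _))
  · intro p
    exact surj (p.totalDegree + 1) p (mem_degLT_of_totalDegree (Nat.lt_succ_self _))

/-! ### Real zeros of odd polynomial systems -/

/-- The algebra automorphism `p(x) ↦ p(-x)`. Even polynomials are its fixed points and odd ones satisfy
`flipSign σ p = -p`. -/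
noncomputable def flipSign (σ : Type*) : MvPolynomial σ ℝ →ₐ[ℝ] MvPolynomial σ ℝ :=
  aeval (fun i => -X i)

lemma flipSign_X {σ : Type*} (i : σ) : flipSign σ (X i) = -X i := by simp [flipSign]

lemma flipSign_monomial {σ : Type*} [Fintype σ] (m : σ →₀ ℕ) :
    flipSign σ (monomial m 1) = (-1 : ℝ) ^ (∑ i, m i) • monomial m 1 := by
  rw [monomial_eq_univ_prod, map_prod, smul_eq_C_mul, map_pow, map_neg, C_1,
    ← Finset.prod_pow_eq_pow_sum, ← Finset.prod_mul_distrib]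
  refine Finset.prod_congr rfl fun i _ => ?_
  rw [map_pow, flipSign_X, neg_pow]

lemma eval_flipSign {σ : Type*} (y : σ → ℝ) (p : MvPolynomial σ ℝ) :
    eval y (flipSign σ p) = eval (-y) p := by
  have : (eval y).comp (flipSign σ : MvPolynomial σ ℝ →+* MvPolynomial σ ℝ) = eval (-y) := by
    ext i <;> simp [flipSign]
  exact RingHom.congr_fun this p

lemma flipSign_redMap {σ : Type*} [Fintype σ] {e : σ → ℕ} {G : σ → MvPolynomial σ ℝ}
    (hθ : ∀ i, flipSign σ (G i) = (-1 : ℝ) ^ e i • G i) (p : MvPolynomial σ ℝ) :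
    flipSign σ (redMap e G p) = redMap e G (flipSign σ p) := by
  have : (flipSign σ).toLinearMap ∘ₗ redMap e G = redMap e G ∘ₗ (flipSign σ).toLinearMap := by
    refine (basisMonomials σ ℝ).ext fun m => ?_
    simp only [coe_basisMonomials, LinearMap.comp_apply, AlgHom.toLinearMap_apply]
    rw [flipSign_monomial, map_smul, redMap_monomial, map_prod, smul_eq_C_mul, map_pow, map_neg,
      C_1, ← Finset.prod_pow_eq_pow_sum, ← Finset.prod_mul_distrib]
    refine Finset.prod_congr rfl fun i _ => ?_
    rw [map_mul, map_pow, map_pow, flipSign_X, hθ, smul_eq_C_mul, map_pow, map_neg, C_1, mul_pow,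
      neg_pow, ← pow_mul]
    have hm : (-1 : MvPolynomial σ ℝ) ^ m i = (-1) ^ (m i % e i) * (-1) ^ (e i * (m i / e i)) := by
      rw [← pow_add, Nat.mod_add_div]
    rw [hm]
    ring
  exact LinearMap.congr_fun this p

/-- Exponent vectors in the box `∏ [0, e i)` with even sum. -/
noncomputable def evenBox {σ : Type*} [Fintype σ] (e : σ → ℕ) : Finset (σ →₀ ℕ) :=
  ((Fintype.piFinset fun i => Finset.range (e i)).filter fun a => Even (∑ i, a i)).map
    Finsupp.equivFunOnFinite.symm.toEmbedding

lemma mem_evenBox {σ : Type*} [Fintype σ] {e : σ → ℕ} {m : σ →₀ ℕ} :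
    m ∈ evenBox e ↔ (∀ i, m i < e i) ∧ Even (∑ i, m i) := by
  simp only [evenBox, Finset.mem_map_equiv, Finset.mem_filter, Fintype.mem_piFinset,
    Finset.mem_range, Equiv.symm_symm]
  rfl

/-- The even side `e a` makes the box split evenly between even and odd sums, so half of
`6 ∏_{i ≠ a} e i` vectors are even, and this half is odd. -/
lemma card_evenBox {σ : Type*} [Fintype σ] {e : σ → ℕ} {a : σ} (ha : e a = 6)
    (ho : ∀ i, i ≠ a → Odd (e i)) : Odd (evenBox e).card := by
  set P := Fintype.piFinset fun i => Finset.range (e i) with hP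
  have h1 : P.card = 6 * ∏ i ∈ Finset.univ.erase a, e i := by
    rw [hP, Fintype.card_piFinset, ← Finset.mul_prod_erase _ _ (Finset.mem_univ a)]
    simp [ha]
  have h2 : ∑ x ∈ P, (-1 : ℤ) ^ (∑ i, x i) = 0 := by
    simp_rw [← Finset.prod_pow_eq_pow_sum]
    rw [hP, ← Finset.prod_univ_sum (fun i => Finset.range (e i)) (fun _ k => (-1 : ℤ) ^ k)]
    refine Finset.prod_eq_zero (Finset.mem_univ a) ?_
    rw [ha]; decide
  have h3 : ∑ x ∈ P, (1 + (-1 : ℤ) ^ (∑ i, x i)) =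
      2 * ((P.filter fun a => Even (∑ i, a i)).card : ℤ) := by
    rw [Finset.card_filter, Nat.cast_sum, Finset.mul_sum]
    refine Finset.sum_congr rfl fun x _ => ?_
    split_ifs with h
    · rw [h.neg_one_pow]; norm_num
    · rw [(Nat.not_even_iff_odd.1 h).neg_one_pow]; norm_num
  rw [Finset.sum_add_distrib, h2, Finset.sum_const, nsmul_one, add_zero, h1] at h3
  have h4 : (evenBox e).card = 3 * ∏ i ∈ Finset.univ.erase a, e i := by
    rw [evenBox, Finset.card_map]
    push_cast at h3
    zify
    linarith
  rw [h4]
  refine Odd.mul (by decide) ?_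
  refine Finset.prod_induction _ Odd (fun _ _ => Odd.mul) odd_one fun i hi => ho i ?_
  exact Finset.ne_of_mem_erase hi

/-- Even functionals vanishing on the ideal generated by the `G i`. -/
def dualK {σ : Type*} (G : σ → MvPolynomial σ ℝ) : Submodule ℝ (MvPolynomial σ ℝ →ₗ[ℝ] ℝ) where
  carrier := {φ | (∀ p, φ (flipSign σ p) = φ p) ∧ ∀ p i, φ (p * G i) = 0}
  add_mem' := by
    rintro φ ψ ⟨h1, h2⟩ ⟨h3, h4⟩
    exact ⟨fun p => by simp [h1, h3], fun p i => by simp [h2, h4]⟩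
  zero_mem' := ⟨fun p => by simp, fun p i => by simp⟩
  smul_mem' := by
    rintro c φ ⟨h1, h2⟩
    exact ⟨fun p => by simp [h1], fun p i => by simp [h2]⟩

lemma redMap_mul_X_pow {σ : Type*} [Fintype σ] {e : σ → ℕ} (he : ∀ i, 0 < e i)
    (G : σ → MvPolynomial σ ℝ) (p : MvPolynomial σ ℝ) (i : σ) :
    redMap e G (p * X i ^ e i) = redMap e G p * G i := by
  have : redMap e G ∘ₗ LinearMap.mulRight ℝ (X i ^ e i) =
      LinearMap.mulRight ℝ (G i) ∘ₗ redMap e G := by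
    refine (basisMonomials σ ℝ).ext fun m => ?_
    simp only [coe_basisMonomials, LinearMap.comp_apply, LinearMap.mulRight_apply]
    rw [X_pow_eq_monomial, monomial_mul, one_mul, redMap_monomial, redMap_monomial,
      ← Finset.mul_prod_erase _ _ (Finset.mem_univ i),
      ← Finset.mul_prod_erase Finset.univ (fun i => X i ^ (m i % e i) * G i ^ (m i / e i))
        (Finset.mem_univ i)]
    have : ∀ j ∈ Finset.univ.erase i, (m + Finsupp.single i (e i)) j = m j := by
      intro j hj
      simp [(Finset.ne_of_mem_erase hj).symm]
    rw [Finset.prod_congr rfl fun j hj => by rw [this j hj]]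
    simp only [Finsupp.add_apply, Finsupp.single_eq_same, Nat.add_mod_right,
      Nat.add_div_right _ (he i), pow_succ]
    ring
  exact LinearMap.congr_fun this p

/-- Pulling back along the bijection `redMap e G` turns `dualK G` into the even functionals
vanishing on the monomial ideal generated by the `Xᵢ ^ eᵢ`, which are determined by arbitrary values
on the monomials with exponents in `evenBox e`. -/
lemma finrank_dualK {σ : Type*} [Fintype σ] {e : σ → ℕ} (he : ∀ i, 0 < e i)
    {G : σ → MvPolynomial σ ℝ} (hG : ∀ i, Near (e i) (G i) (X i ^ e i))
    (hθ : ∀ i, flipSign σ (G i) = (-1 : ℝ) ^ e i • G i) :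
    Nonempty (dualK G ≃ₗ[ℝ] (evenBox e → ℝ)) := by
  set Φ := LinearEquiv.ofBijective (redMap e G) (redMap_bijective hG) with hΦ
  have hΦa : ∀ p, Φ p = redMap e G p := fun p => rfl
  let F : dualK G →ₗ[ℝ] (evenBox e → ℝ) :=
    { toFun := fun φ b => φ.1 (redMap e G (monomial b.1 1))
      map_add' := fun _ _ => rfl
      map_smul' := fun _ _ => rfl }
  refine ⟨LinearEquiv.ofBijective F ⟨?_, ?_⟩⟩
  · rw [injective_iff_map_eq_zero]
    rintro ⟨φ, h1, h2⟩ h0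
    have h0' : ∀ b ∈ evenBox e, φ (redMap e G (monomial b 1)) = 0 := fun b hb =>
      congr_fun h0 ⟨b, hb⟩
    have hz : φ ∘ₗ redMap e G = 0 := by
      refine (basisMonomials σ ℝ).ext fun m => ?_
      simp only [coe_basisMonomials, LinearMap.comp_apply, LinearMap.zero_apply]
      by_cases hm : m ∈ evenBox e
      · exact h0' m hm
      rw [mem_evenBox, not_and_or] at hm
      rcases hm with hm | hm
      · push Not at hm
        obtain ⟨i, hi⟩ := hm
        have : (monomial m 1 : MvPolynomial σ ℝ) =
            monomial (m - Finsupp.single i (e i)) 1 * X i ^ e i := by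
          rw [X_pow_eq_monomial, monomial_mul, one_mul, tsub_add_cancel_of_le]
          simpa using hi
        rw [this, redMap_mul_X_pow he, h2]
      · have := h1 (redMap e G (monomial m 1))
        rw [flipSign_redMap hθ, flipSign_monomial, (Nat.not_even_iff_odd.1 hm).neg_one_pow,
          map_smul, map_smul, smul_eq_mul] at this
        linarith
    refine Subtype.ext ?_
    ext1 m
    refine LinearMap.ext fun r => ?_
    obtain ⟨q, hq⟩ := (redMap_bijective hG).2 (monomial m r)
    have := LinearMap.congr_fun hz q
    rw [LinearMap.comp_apply, hq] at this
    exact this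
  · intro c
    let l : MvPolynomial σ ℝ →ₗ[ℝ] ℝ := (basisMonomials σ ℝ).constr ℝ
      (fun m => if h : m ∈ evenBox e then c ⟨m, h⟩ else 0)
    have hl : ∀ m, l (monomial m 1) = if h : m ∈ evenBox e then c ⟨m, h⟩ else 0 := fun m =>
      (basisMonomials σ ℝ).constr_basis ℝ _ m
    have hlθ : l ∘ₗ (flipSign σ).toLinearMap = l := by
      refine (basisMonomials σ ℝ).ext fun m => ?_
      simp only [coe_basisMonomials, LinearMap.comp_apply, AlgHom.toLinearMap_apply]
      rw [flipSign_monomial, map_smul, hl]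
      split_ifs with h
      · rw [(mem_evenBox.1 h).2.neg_one_pow, one_smul]
      · simp
    have hlG : ∀ i, l ∘ₗ LinearMap.mulRight ℝ (X i ^ e i) = 0 := by
      intro i
      refine (basisMonomials σ ℝ).ext fun m => ?_
      simp only [coe_basisMonomials, LinearMap.comp_apply, LinearMap.mulRight_apply,
        LinearMap.zero_apply]
      rw [X_pow_eq_monomial, monomial_mul, one_mul, hl, dif_neg]
      intro h
      have := (mem_evenBox.1 h).1 i
      simp at this
    refine ⟨⟨l ∘ₗ Φ.symm.toLinearMap, ?_, ?_⟩, ?_⟩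
    · intro p
      obtain ⟨q, rfl⟩ := Φ.surjective p
      simp only [LinearMap.comp_apply, LinearEquiv.coe_coe, LinearEquiv.symm_apply_apply]
      rw [hΦa, flipSign_redMap hθ, ← hΦa, LinearEquiv.symm_apply_apply]
      exact LinearMap.congr_fun hlθ q
    · intro p i
      obtain ⟨q, rfl⟩ := Φ.surjective p
      simp only [LinearMap.comp_apply, LinearEquiv.coe_coe]
      rw [hΦa, ← redMap_mul_X_pow he, ← hΦa, LinearEquiv.symm_apply_apply]
      exact LinearMap.congr_fun (hlG i) q
    · funext b
      change l (Φ.symm (redMap e G (monomial b.1 1))) = c b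
      rw [← hΦa, LinearEquiv.symm_apply_apply, hl, dif_pos b.2]

/-- A square system whose equation `G a` is `x_a ^ 6 + ∑ x_j ^ 2 = 1` and whose other equations are
odd with leading forms `x_i ^ (e i)` has a real solution. The operators dual to multiplication by
`X i * X j` commute on the odd-dimensional space `dualK G`; a common eigenvector is, up to a scalar,
the average of the evaluations at some `y` and `-y`. -/
theorem exists_real_zero {σ : Type*} [Fintype σ] {e : σ → ℕ} {a : σ} (ha : e a = 6)
    (ho : ∀ i, i ≠ a → Odd (e i))
    {G : σ → MvPolynomial σ ℝ} (hG : ∀ i, Near (e i) (G i) (X i ^ e i))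
    (hθ : ∀ i, flipSign σ (G i) = (-1 : ℝ) ^ e i • G i)
    (hGa : G a = X a ^ 6 + ∑ j, X j ^ 2 - 1) :
    ∃ y : σ → ℝ, ∀ i, eval y (G i) = 0 := by
  have he : ∀ i, 0 < e i := by
    intro i
    by_cases h : i = a
    · rw [h, ha]; norm_num
    · exact (ho i h).pos
  obtain ⟨E⟩ := finrank_dualK he hG hθ
  have : FiniteDimensional ℝ (dualK G) := E.symm.finiteDimensional
  have hodd : Odd (Module.finrank ℝ (dualK G)) := by
    rw [E.finrank_eq, Module.finrank_fintype_fun_eq_card, Fintype.card_coe]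
    exact card_evenBox ha ho
  have hinv : ∀ (ij : σ × σ), ∀ φ ∈ dualK G,
      (LinearMap.mulLeft ℝ (X ij.1 * X ij.2 : MvPolynomial σ ℝ)).dualMap φ ∈ dualK G := by
    rintro ⟨i, j⟩ φ ⟨h1, h2⟩
    refine ⟨fun p => ?_, fun p k => ?_⟩
    · simp only [LinearMap.dualMap_apply, LinearMap.mulLeft_apply]
      rw [← h1 (X i * X j * p)]
      simp [flipSign_X]
    · simp only [LinearMap.dualMap_apply, LinearMap.mulLeft_apply]
      rw [← mul_assoc, h2]
  obtain ⟨⟨φ, hφ⟩, hφ0, l, hl⟩ := exists_common_eigenvector (V := dualK G) _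
    (fun ij : σ × σ => (LinearMap.mulLeft ℝ (X ij.1 * X ij.2 : MvPolynomial σ ℝ)).dualMap.restrict
      (hinv ij)) rfl hodd (by
        intro i j
        ext φ p
        simp only [Module.End.mul_apply, LinearMap.coe_restrict_apply, LinearMap.dualMap_apply,
          LinearMap.mulLeft_apply, LinearMap.coe_comp, Function.comp_apply]
        congr 1
        ring)
  have hmul : ∀ i j p, φ (X i * X j * p) = l (i, j) * φ p := by
    intro i j p
    have := congrArg Subtype.val (hl (i, j))
    exact LinearMap.congr_fun this p
  have hφne : φ ≠ 0 := fun h => hφ0 (Subtype.ext h)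
  obtain ⟨hev, hid⟩ := hφ
  have hodd0 : ∀ p, flipSign σ p = -p → φ p = 0 := by
    intro p hp
    have := hev p
    rw [hp, map_neg] at this
    linarith
  obtain ⟨p₀, hp₀⟩ : ∃ p, φ p ≠ 0 := by
    by_contra h
    push Not at h
    exact hφne (LinearMap.ext h)
  -- the relation `G a = 0` forces some diagonal eigenvalue to be positive
  obtain ⟨b, hb⟩ : ∃ b, 0 < l (b, b) := by
    by_contra hcon
    push Not at hcon
    have h1 := hid p₀ a
    have e6 : φ (X a ^ 6 * p₀) = l (a, a) ^ 3 * φ p₀ := by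
      have : (X a ^ 6 * p₀ : MvPolynomial σ ℝ) = X a * X a * (X a * X a * (X a * X a * p₀)) := by
        ring
      rw [this, hmul, hmul, hmul]; ring
    have e2 : ∀ j, φ (X j ^ 2 * p₀) = l (j, j) * φ p₀ := by
      intro j
      rw [pow_two, hmul]
    rw [mul_comm, hGa, sub_mul, add_mul, Finset.sum_mul, one_mul, map_sub, map_add, map_sum, e6,
      Finset.sum_congr rfl fun j _ => e2 j, ← Finset.sum_mul, ← add_mul] at h1
    have h2 : (l (a, a) ^ 3 + ∑ j, l (j, j) - 1) * φ p₀ = 0 := by rw [← h1]; ring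
    have h := (mul_eq_zero.1 h2).resolve_right hp₀
    have h3 : ∑ j, l (j, j) ≤ 0 := Finset.sum_nonpos fun j _ => hcon j
    have h4 : l (a, a) ^ 3 ≤ 0 := Odd.pow_nonpos (by decide) (hcon a)
    linarith
  set s := √(l (b, b)) with hs
  have hs0 : 0 < s := Real.sqrt_pos.2 hb
  have hss : s ^ 2 = l (b, b) := Real.sq_sqrt hb.le
  set y : σ → ℝ := fun j => l (b, j) / s with hy
  have hsy : ∀ j, s * y j = l (b, j) := fun j => by rw [hy]; field_simp
  have hyb : y b ≠ 0 := by
    intro h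
    have := hsy b
    rw [h, mul_zero] at this
    linarith
  have hM : ∀ q p, φ (aeval (fun j => X b * X j) q * p) = eval (fun j => s * y j) q * φ p := by
    intro q
    induction q using MvPolynomial.induction_on with
    | C r => intro p; rw [aeval_C, eval_C, algebraMap_eq, ← smul_eq_C_mul, map_smul, smul_eq_mul]
    | add q r hq hr => intro p; rw [map_add, map_add, add_mul, map_add, hq, hr, add_mul]
    | mul_X q j hq =>
      intro p
      rw [map_mul (aeval _), map_mul (eval _), aeval_X, eval_X, mul_assoc, hq, hmul, hsy, mul_assoc]
  have hbk : ∀ k p, φ (X b ^ (2 * k) * p) = s ^ (2 * k) * φ p := by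
    intro k
    induction k with
    | zero => intro p; simp
    | succ k ih =>
      intro p
      have : (X b ^ (2 * (k + 1)) * p : MvPolynomial σ ℝ) = X b ^ (2 * k) * (X b * X b * p) := by
        ring
      rw [this, ih, hmul, ← hss]; ring
  have hform : ∀ p, φ p = φ 1 * ((eval y p + eval (-y) p) / 2) := by
    have : φ = (φ 1 / 2) • ((aeval y).toLinearMap + (aeval (-y)).toLinearMap) := by
      refine (basisMonomials σ ℝ).ext fun m => ?_
      simp only [coe_basisMonomials, LinearMap.smul_apply, LinearMap.add_apply,
        AlgHom.toLinearMap_apply, smul_eq_mul]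
      have hneg : (aeval (-y) (monomial m 1 : MvPolynomial σ ℝ) : ℝ) =
          (-1) ^ (∑ i, m i) * aeval y (monomial m 1 : MvPolynomial σ ℝ) := by
        rw [monomial_eq_univ_prod, map_prod, map_prod, ← Finset.prod_pow_eq_pow_sum,
          ← Finset.prod_mul_distrib]
        refine Finset.prod_congr rfl fun i _ => ?_
        simp [← mul_pow]
      rw [hneg]
      rcases Nat.even_or_odd (∑ i, m i) with h | h
      · rw [h.neg_one_pow]
        obtain ⟨k, hk⟩ := h.two_dvd
        have h1 := hM (monomial m 1) 1
        have h2 : aeval (fun j => X b * X j) (monomial m 1 : MvPolynomial σ ℝ) =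
            (X b ^ (2 * k) * monomial m 1 : MvPolynomial σ ℝ) := by
          rw [monomial_eq_univ_prod, map_prod, ← hk, ← Finset.prod_pow_eq_pow_sum,
            ← Finset.prod_mul_distrib]
          refine Finset.prod_congr rfl fun i _ => ?_
          simp [mul_pow]
        have h3 : eval (fun j => s * y j) (monomial m 1) =
            s ^ (2 * k) * aeval y (monomial m 1 : MvPolynomial σ ℝ) := by
          rw [monomial_eq_univ_prod, map_prod, map_prod, ← hk, ← Finset.prod_pow_eq_pow_sum,
            ← Finset.prod_mul_distrib]
          refine Finset.prod_congr rfl fun i _ => ?_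
          simp [mul_pow]
        rw [mul_one, h2, hbk, h3, mul_assoc] at h1
        have h4 := mul_left_cancel₀ (pow_pos hs0 _).ne' h1
        rw [h4]; ring
      · rw [h.neg_one_pow, hodd0]
        · ring
        · rw [flipSign_monomial, h.neg_one_pow]; simp
    intro p
    conv_lhs => rw [this]
    have hae : ∀ z : σ → ℝ, aeval z p = eval z p := fun z => by rw [← coe_aeval_eq_eval]; rfl
    simp only [LinearMap.smul_apply, LinearMap.add_apply, AlgHom.toLinearMap_apply, smul_eq_mul, hae]
    ring
  have hφ1 : φ 1 ≠ 0 := by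
    intro h
    apply hp₀
    rw [hform, h, zero_mul]
  refine ⟨y, fun i => ?_⟩
  have hneg : eval (-y) (G i) = (-1) ^ e i * eval y (G i) := by
    rw [← eval_flipSign, hθ, smul_eval]
  rcases Nat.even_or_odd (e i) with h | h
  · have h1 := hform (1 * G i)
    rw [hid, one_mul, hneg, h.neg_one_pow] at h1
    have := (mul_eq_zero.1 h1.symm).resolve_left hφ1
    linarith
  · have h1 := hform (X b * G i)
    rw [hid, map_mul, map_mul, hneg, h.neg_one_pow, eval_X, eval_X] at h1
    have := (mul_eq_zero.1 h1.symm).resolve_left hφ1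
    have h2 : y b * eval y (G i) = 0 := by
      simp only [Pi.neg_apply] at this
      linarith
    exact (mul_eq_zero.1 h2).resolve_left hyb

/-! ### Borsuk–Ulam and the ham sandwich theorem -/

/-- Approximate Borsuk–Ulam theorem for odd polynomial maps on the symmetric hypersurface
`y₀ ^ 6 + ∑ y_j ^ 2 = 1`. The perturbation `ε x_i ^ (2K+1) + f i` has a prescribed leading form, so it
has an exact common zero. -/
theorem borsuk_ulam_approx {ι : Type*} [Fintype ι] (f : ι → MvPolynomial (Option ι) ℝ)
    (hf : ∀ i, flipSign _ (f i) = -f i) {ε : ℝ} (hε : 0 < ε) :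
    ∃ y : Option ι → ℝ, y none ^ 6 + ∑ j, y j ^ 2 = 1 ∧ ∀ i, |eval y (f i)| ≤ ε := by
  set K := ∑ i, (f i).totalDegree with hK
  have hKi : ∀ i, (f i).totalDegree ≤ K := fun i =>
    Finset.single_le_sum (f := fun i => (f i).totalDegree) (fun _ _ => Nat.zero_le _)
      (Finset.mem_univ i)
  let e : Option ι → ℕ := fun o => o.elim 6 (fun _ => 2 * K + 1)
  let G : Option ι → MvPolynomial (Option ι) ℝ := fun o =>
    o.elim (X none ^ 6 + ∑ j, X j ^ 2 - 1) (fun i => X (some i) ^ (2 * K + 1) + C ε⁻¹ * f i)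
  have hX : ∀ (i : Option ι) (k : ℕ),
      (X i ^ k : MvPolynomial (Option ι) ℝ) ∈ degLT (Option ι) (k + 1) := fun i k =>
    mem_degLT_of_totalDegree (by rw [totalDegree_X_pow]; omega)
  have hG : ∀ i, Near (e i) (G i) (X i ^ e i) := by
    rintro (_ | i)
    · refine ⟨?_, hX _ _⟩
      change X none ^ 6 + ∑ j, X j ^ 2 - 1 - X none ^ 6 ∈ degLT (Option ι) 6
      have : (X none ^ 6 + ∑ j, X j ^ 2 - 1 - X none ^ 6 : MvPolynomial (Option ι) ℝ) =
          ∑ j, X j ^ 2 - 1 := by ring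
      rw [this]
      refine (degLT _ _).sub_mem ((degLT _ _).sum_mem fun j _ => ?_) ?_
      · exact degLT_mono (by norm_num) (hX j 2)
      · exact mem_degLT_of_totalDegree (by simp)
    · refine ⟨?_, hX _ _⟩
      change X (some i) ^ (2 * K + 1) + C ε⁻¹ * f i - X (some i) ^ (2 * K + 1) ∈
        degLT (Option ι) (2 * K + 1)
      rw [add_sub_cancel_left, ← smul_eq_C_mul]
      refine (degLT _ _).smul_mem _ (mem_degLT_of_totalDegree ?_)
      have := hKi i
      omega
  have hθ : ∀ i, flipSign _ (G i) = (-1 : ℝ) ^ e i • G i := by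
    rintro (_ | i)
    · change flipSign _ (X none ^ 6 + ∑ j, X j ^ 2 - 1) =
        (-1 : ℝ) ^ 6 • (X none ^ 6 + ∑ j, X j ^ 2 - 1 : MvPolynomial (Option ι) ℝ)
      simp [flipSign_X, Even.neg_pow (show Even 6 by decide)]
    · change flipSign _ (X (some i) ^ (2 * K + 1) + C ε⁻¹ * f i) =
        (-1 : ℝ) ^ (2 * K + 1) • (X (some i) ^ (2 * K + 1) + C ε⁻¹ * f i)
      have ho : Odd (2 * K + 1) := ⟨K, rfl⟩
      rw [ho.neg_one_pow, ← smul_eq_C_mul, map_add, map_smul, hf, map_pow, flipSign_X, ho.neg_pow,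
        neg_one_smul, smul_neg, neg_add]
  obtain ⟨y, hy⟩ := exists_real_zero (a := none) (e := e) rfl
    (by
      rintro (_ | i) hi
      · exact absurd rfl hi
      · exact ⟨K, rfl⟩) hG hθ rfl
  have h0 : y none ^ 6 + ∑ j, y j ^ 2 = 1 := by
    have := hy none
    change eval y (X none ^ 6 + ∑ j, X j ^ 2 - 1) = 0 at this
    simp only [map_sub, map_add, map_pow, eval_X, map_sum, map_one] at this
    linarith
  refine ⟨y, h0, fun i => ?_⟩
  -- at the zero, `f i` equals minus the perturbation, which is at most `ε` as `|y (some i)| ≤ 1`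
  have h1 := hy (some i)
  change eval y (X (some i) ^ (2 * K + 1) + C ε⁻¹ * f i) = 0 at h1
  simp only [map_add, map_mul, map_pow, eval_X, eval_C] at h1
  have h2 : eval y (f i) = -(ε * y (some i) ^ (2 * K + 1)) := by
    field_simp at h1
    linarith
  have h3 : |y (some i)| ≤ 1 := by
    rw [abs_le_one_iff_mul_self_le_one]
    have h4 : y (some i) ^ 2 ≤ ∑ j, y j ^ 2 :=
      Finset.single_le_sum (f := fun j => y j ^ 2) (fun j _ => sq_nonneg _) (Finset.mem_univ _)
    have h5 : 0 ≤ y none ^ 6 := Even.pow_nonneg (by decide) _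
    nlinarith
  rw [h2, abs_neg, abs_mul, abs_of_pos hε, abs_pow]
  exact mul_le_of_le_one_right hε.le (pow_le_one₀ (abs_nonneg _) h3)

/-- An odd polynomial approximating the sign function on `[-M, M]`, away from zero. -/
lemma exists_odd_sign_poly (M : ℝ) {δ η : ℝ} (hδ : 0 < δ) (hη : 0 < η) :
    ∃ h : Polynomial ℝ, h.comp (-Polynomial.X) = -h ∧
      ∀ t, |t| ≤ M → |h.eval t| ≤ 1 + η ∧ (δ < t → 1 - η ≤ h.eval t) := by
  let c : ℝ → ℝ := fun t => max (-1) (min 1 (t / δ))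
  obtain ⟨p, hp⟩ := exists_polynomial_near_of_continuousOn (-M) M c
    (by fun_prop) η hη
  have hcodd : ∀ t, c (-t) = -c t := by
    intro t
    simp only [c, neg_div]
    simp only [max_def, min_def]
    split_ifs <;> linarith
  have hcle : ∀ t, |c t| ≤ 1 := fun t =>
    abs_le.2 ⟨le_max_left _ _, max_le (by norm_num) (min_le_left _ _)⟩
  refine ⟨Polynomial.C (1 / 2) * (p - p.comp (-Polynomial.X)), ?_, ?_⟩
  · simp only [Polynomial.mul_comp, Polynomial.sub_comp, Polynomial.comp_assoc, Polynomial.neg_comp,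
      Polynomial.X_comp, neg_neg, Polynomial.comp_X, Polynomial.C_comp]
    ring
  · intro t ht
    have hh : (Polynomial.C (1 / 2) * (p - p.comp (-Polynomial.X))).eval t =
        (p.eval t - p.eval (-t)) / 2 := by
      simp; ring
    rw [hh]
    have h1 := abs_lt.1 (hp t (abs_le.1 ht))
    have h2 := abs_lt.1 (hp (-t) (abs_le.1 (by rwa [abs_neg])))
    rw [hcodd] at h2
    have h3 := abs_le.1 (hcle t)
    refine ⟨abs_le.2 ⟨by linarith, by linarith⟩, fun h => ?_⟩
    have : c t = 1 := by
      have : 1 ≤ t / δ := (one_le_div hδ).2 h.le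
      simp [c, this]
    linarith

/-- Counting: if the odd sum is almost zero, then at most half the values are large. -/
lemma card_le_of_sum_small {α : Type*} (s : Finset α) (t : α → ℝ) (P : α → Prop) {η : ℝ}
    (hη : ((s.card : ℝ) + 1) * η < 1) (h1 : ∀ q ∈ s, -(1 + η) ≤ t q)
    (h2 : ∀ q ∈ s, P q → 1 - η ≤ t q) (hs : ∑ q ∈ s, t q ≤ η) :
    2 * (s.filter P).card ≤ s.card := by
  rw [← Finset.sum_filter_add_sum_filter_not s P] at hs
  have e1 : ((s.filter P).card : ℝ) * (1 - η) ≤ ∑ q ∈ s.filter P, t q := by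
    rw [← nsmul_eq_mul]
    exact Finset.card_nsmul_le_sum _ _ _ fun q hq =>
      h2 q (Finset.mem_filter.1 hq).1 (Finset.mem_filter.1 hq).2
  have e2 : ((s.filter fun q => ¬ P q).card : ℝ) * (-(1 + η)) ≤
      ∑ q ∈ s.filter (fun q => ¬ P q), t q := by
    rw [← nsmul_eq_mul]
    exact Finset.card_nsmul_le_sum _ _ _ fun q hq => h1 q (Finset.mem_filter.1 hq).1
  have e3 : (s.card : ℝ) = (s.filter P).card + (s.filter fun q => ¬ P q).card := by
    rw [← Finset.card_filter_add_card_filter_not (s := s) P]; push_cast; ring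
  have : (2 * (s.filter P).card : ℝ) < s.card + 1 := by
    rw [e3] at hη ⊢
    nlinarith
  have : 2 * (s.filter P).card < s.card + 1 := by exact_mod_cast this
  omega

/-- Borsuk–Ulam applied to the sums over `Q i` of an odd polynomial approximation of the sign of
`∑ j, y j * L q j`. -/
lemma ham_sandwich_approx {ι α : Type*} [Fintype ι] (Q : ι → Finset α) (L : α → Option ι → ℝ)
    {δ : ℝ} (hδ : 0 < δ) :
    ∃ y : Option ι → ℝ, y none ^ 6 + ∑ j, y j ^ 2 = 1 ∧ ∀ i,
      2 * ((Q i).filter fun q => δ < ∑ j, y j * L q j).card ≤ (Q i).card ∧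
      2 * ((Q i).filter fun q => δ < -∑ j, y j * L q j).card ≤ (Q i).card := by
  obtain ⟨M, hMq⟩ : ∃ M, ∀ i, ∀ q ∈ Q i, ∑ j, |L q j| ≤ M := by
    refine ⟨∑ i, ∑ q ∈ Q i, ∑ j, |L q j|, fun i q hq => ?_⟩
    have a1 : ∑ j, |L q j| ≤ ∑ q ∈ Q i, ∑ j, |L q j| :=
      Finset.single_le_sum (f := fun q => ∑ j, |L q j|)
        (fun q _ => Finset.sum_nonneg fun j _ => abs_nonneg _) hq
    have a2 : ∑ q ∈ Q i, ∑ j, |L q j| ≤ ∑ i, ∑ q ∈ Q i, ∑ j, |L q j| :=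
      Finset.single_le_sum (f := fun i => ∑ q ∈ Q i, ∑ j, |L q j|)
        (fun i _ => Finset.sum_nonneg fun q _ => Finset.sum_nonneg fun j _ => abs_nonneg _)
        (Finset.mem_univ i)
    exact a1.trans a2
  obtain ⟨N, hN0, hNi⟩ : ∃ N : ℝ, 0 ≤ N ∧ ∀ i, ((Q i).card : ℝ) ≤ N :=
    ⟨∑ i, ((Q i).card : ℝ), Finset.sum_nonneg fun i _ => Nat.cast_nonneg _, fun i =>
      Finset.single_le_sum (f := fun i => ((Q i).card : ℝ)) (fun i _ => Nat.cast_nonneg _)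
        (Finset.mem_univ i)⟩
  -- chosen so that the total error stays below the integrality gap in `card_le_of_sum_small`
  set η : ℝ := 1 / (N + 2) with hη
  have hη0 : 0 < η := by positivity
  obtain ⟨h, hodd, hh⟩ := exists_odd_sign_poly M hδ hη0
  let P : α → MvPolynomial (Option ι) ℝ := fun q => ∑ j, C (L q j) * X j
  have hP : ∀ q, flipSign _ (P q) = -P q := by
    intro q
    simp only [P, map_sum, ← smul_eq_C_mul, map_smul, flipSign_X, smul_neg, Finset.sum_neg_distrib]
  obtain ⟨y, hy, hf⟩ := borsuk_ulam_approx (fun i => ∑ q ∈ Q i, Polynomial.aeval (P q) h)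
    (by
      intro i
      rw [map_sum, ← Finset.sum_neg_distrib]
      refine Finset.sum_congr rfl fun q _ => ?_
      rw [← Polynomial.aeval_algHom_apply, hP, ← map_neg, ← hodd, Polynomial.aeval_comp]
      simp) hη0
  refine ⟨y, hy, fun i => ?_⟩
  have hev : ∀ q, eval y (Polynomial.aeval (P q) h) = h.eval (∑ j, y j * L q j) := by
    intro q
    have h1 := Polynomial.aeval_algHom_apply (aeval y : MvPolynomial (Option ι) ℝ →ₐ[ℝ] ℝ) (P q) h
    have h2 : (aeval y : MvPolynomial (Option ι) ℝ →ₐ[ℝ] ℝ) (P q) = ∑ j, y j * L q j := by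
      simp [P, mul_comm]
    rw [h2] at h1
    rw [← coe_aeval_eq_eval, RingHom.coe_coe, ← h1]
    simp
  have hi := hf i
  rw [map_sum, Finset.sum_congr rfl fun q _ => hev q] at hi
  have hyle : ∀ j, |y j| ≤ 1 := by
    intro k
    rw [abs_le_one_iff_mul_self_le_one]
    have h4 : y k ^ 2 ≤ ∑ j, y j ^ 2 :=
      Finset.single_le_sum (f := fun j => y j ^ 2) (fun j _ => sq_nonneg _) (Finset.mem_univ _)
    have h5 : 0 ≤ y none ^ 6 := Even.pow_nonneg (by decide) _
    nlinarith
  have hbd : ∀ q ∈ Q i, |∑ j, y j * L q j| ≤ M := by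
    intro q hq
    refine (Finset.abs_sum_le_sum_abs _ _).trans (le_trans ?_ (hMq i q hq))
    refine Finset.sum_le_sum fun j _ => ?_
    rw [abs_mul]
    exact mul_le_of_le_one_left (abs_nonneg _) (hyle j)
  have hneg : ∀ t, h.eval (-t) = -h.eval t := by
    intro t
    have := congrArg (Polynomial.eval t) hodd
    simpa using this
  have hηi : (((Q i).card : ℝ) + 1) * η < 1 := by
    rw [hη, mul_one_div, div_lt_one (by positivity)]
    linarith [hNi i]
  constructor
  · refine card_le_of_sum_small (Q i) (fun q => h.eval (∑ j, y j * L q j)) _ hηi ?_ ?_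
      (abs_le.1 hi).2
    · intro q hq
      exact (abs_le.1 (hh _ (hbd q hq)).1).1
    · intro q hq
      exact (hh _ (hbd q hq)).2
  · refine card_le_of_sum_small (Q i) (fun q => h.eval (-∑ j, y j * L q j)) _ hηi ?_ ?_ ?_
    · intro q hq
      exact (abs_le.1 (hh _ (by rw [abs_neg]; exact hbd q hq)).1).1
    · intro q hq
      exact (hh _ (by rw [abs_neg]; exact hbd q hq)).2
    · simp only [hneg, Finset.sum_neg_distrib]
      linarith [(abs_le.1 hi).1]

open Filter Topology in
/-- Discrete ham sandwich theorem: with one more linear parameter than the number of finite sets, some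
nonzero linear combination is positive on at most half, and negative on at most half, of each set.
Obtained from the approximate version by compactness, since positivity is an open condition. -/
theorem ham_sandwich {ι α : Type*} [Fintype ι] (Q : ι → Finset α) (L : α → Option ι → ℝ) :
    ∃ y : Option ι → ℝ, y ≠ 0 ∧ ∀ i,
      2 * ((Q i).filter fun q => 0 < ∑ j, y j * L q j).card ≤ (Q i).card ∧
      2 * ((Q i).filter fun q => ∑ j, y j * L q j < 0).card ≤ (Q i).card := by
  choose y hy1 hy2 using fun k : ℕ =>
    ham_sandwich_approx Q L (δ := 1 / ((k : ℝ) + 1)) (by positivity)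
  have hmem : ∀ k, y k ∈ Set.pi Set.univ (fun _ : Option ι => Set.Icc (-1 : ℝ) 1) := by
    intro k j _
    rw [Set.mem_Icc, ← abs_le, abs_le_one_iff_mul_self_le_one]
    have h4 : y k j ^ 2 ≤ ∑ j, y k j ^ 2 :=
      Finset.single_le_sum (f := fun j => y k j ^ 2) (fun j _ => sq_nonneg _) (Finset.mem_univ _)
    have h5 : 0 ≤ y k none ^ 6 := Even.pow_nonneg (by decide) _
    nlinarith [hy1 k]
  obtain ⟨z, -, u, hu, hlim⟩ := (isCompact_univ_pi fun _ : Option ι =>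
    isCompact_Icc (a := (-1 : ℝ)) (b := 1)).tendsto_subseq hmem
  have hδ : Tendsto (fun n => 1 / ((u n : ℝ) + 1)) atTop (𝓝 0) :=
    tendsto_one_div_add_atTop_nhds_zero_nat.comp hu.tendsto_atTop
  have hcont : ∀ q, Tendsto (fun n => ∑ j, y (u n) j * L q j) atTop (𝓝 (∑ j, z j * L q j)) := by
    intro q
    refine tendsto_finsetSum _ fun j _ => ?_
    exact ((tendsto_pi_nhds.1 hlim) j).mul_const _
  refine ⟨z, ?_, fun i => ⟨?_, ?_⟩⟩
  · rintro rfl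
    have h1 : Tendsto (fun n => y (u n) none ^ 6 + ∑ j, y (u n) j ^ 2) atTop
        (𝓝 ((0 : Option ι → ℝ) none ^ 6 + ∑ j, (0 : Option ι → ℝ) j ^ 2)) :=
      (((tendsto_pi_nhds.1 hlim) none).pow 6).add
        (tendsto_finsetSum _ fun j _ => ((tendsto_pi_nhds.1 hlim) j).pow 2)
    simp only [hy1] at h1
    have := tendsto_nhds_unique h1 tendsto_const_nhds
    simp at this
  · have : ∀ᶠ n in atTop, ∀ q ∈ (Q i).filter (fun q => 0 < ∑ j, z j * L q j),
        1 / ((u n : ℝ) + 1) < ∑ j, y (u n) j * L q j := by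
      rw [Filter.eventually_all_finset]
      intro q hq
      exact hδ.eventually_lt (hcont q) (Finset.mem_filter.1 hq).2
    obtain ⟨n, hn⟩ := this.exists
    refine le_trans (Nat.mul_le_mul_left 2 (Finset.card_le_card ?_)) (hy2 (u n) i).1
    intro q hq
    exact Finset.mem_filter.2 ⟨(Finset.mem_filter.1 hq).1, hn q hq⟩
  · have : ∀ᶠ n in atTop, ∀ q ∈ (Q i).filter (fun q => ∑ j, z j * L q j < 0),
        1 / ((u n : ℝ) + 1) < -∑ j, y (u n) j * L q j := by
      rw [Filter.eventually_all_finset]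
      intro q hq
      refine hδ.eventually_lt (hcont q).neg ?_
      have := (Finset.mem_filter.1 hq).2
      linarith
    obtain ⟨n, hn⟩ := this.exists
    refine le_trans (Nat.mul_le_mul_left 2 (Finset.card_le_card ?_)) (hy2 (u n) i).2
    intro q hq
    exact Finset.mem_filter.2 ⟨(Finset.mem_filter.1 hq).1, hn q hq⟩

/-! ### Polynomial partitioning -/

/-- A monomial of top degree in `f` has an exponent at least a third of its total degree. -/
lemma exists_degreeOf_ge (f : MvPolynomial (Fin 3) ℝ) (hf : f ≠ 0) :
    ∃ i, f.totalDegree ≤ 3 * f.degreeOf i := by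
  obtain ⟨m, hm, hd⟩ := Finset.exists_mem_eq_sup f.support (support_nonempty.2 hf)
    (fun m => m.degree)
  by_contra hcon
  push Not at hcon
  have h1 : f.totalDegree = m.degree := by
    rw [← hd]; rfl
  rw [h1, Finsupp.degree_eq_sum, Fin.sum_univ_three] at hcon
  have h2 : ∀ i, m i ≤ f.degreeOf i := fun i => by
    rw [degreeOf_eq_sup]
    exact Finset.le_sup (f := fun m : Fin 3 →₀ ℕ => m i) hm
  have := h2 0; have := h2 1; have := h2 2
  have := hcon 0; have := hcon 1; have := hcon 2
  omega

/-- Exponent vectors with `i`-th entry below `min d (t + 1)` and the other entries at most `t`. -/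
def slabBox (i : Fin 3) (d t : ℕ) : Finset (Fin 3 → ℕ) :=
  Fintype.piFinset fun j => Finset.range (if j = i then min d (t + 1) else t + 1)

lemma card_slabBox (i : Fin 3) (d t : ℕ) :
    (slabBox i d t).card = min d (t + 1) * (t + 1) ^ 2 := by
  rw [slabBox, Fintype.card_piFinset]
  simp only [Finset.card_range]
  rw [← Finset.mul_prod_erase _ _ (Finset.mem_univ i), if_pos rfl,
    Finset.prod_congr rfl fun j hj => if_neg (Finset.ne_of_mem_erase hj), Finset.prod_const]
  simp

/-- One bisection step. The polynomial is a combination of the monomials in a slab box, whose degree in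
`x_i` is too small for it to be divisible by `f`. -/
lemma exists_bisecting (f : MvPolynomial (Fin 3) ℝ) (i : Fin 3) (d t : ℕ) (hd : d ≤ f.degreeOf i)
    {ι : Type} [Fintype ι] (hcard : Fintype.card ι < min d (t + 1) * (t + 1) ^ 2)
    (Q : ι → Finset (EuclideanSpace ℝ (Fin 3))) :
    ∃ h : MvPolynomial (Fin 3) ℝ, h ≠ 0 ∧ h.totalDegree ≤ 3 * t ∧ ¬ f ∣ h ∧ ∀ k,
      2 * ((Q k).filter fun q => 0 < eval (fun j => q j) h).card ≤ (Q k).card ∧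
      2 * ((Q k).filter fun q => eval (fun j => q j) h < 0).card ≤ (Q k).card := by
  have hc : Fintype.card (Option ι) ≤ Fintype.card (slabBox i d t) := by
    rw [Fintype.card_option, Fintype.card_coe, card_slabBox]
    exact hcard
  obtain ⟨em⟩ := Function.Embedding.nonempty_of_card_le hc
  let ex : Option ι → (Fin 3 →₀ ℕ) := fun o => Finsupp.equivFunOnFinite.symm (em o).1
  have hex : Function.Injective ex := fun a b h =>
    em.injective (Subtype.ext (Finsupp.equivFunOnFinite.symm.injective h))
  have hlt : ∀ o j, ex o j < if j = i then min d (t + 1) else t + 1 := by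
    intro o j
    have := Fintype.mem_piFinset.1 (em o).2 j
    exact Finset.mem_range.1 this
  obtain ⟨y, hy0, hy⟩ := ham_sandwich Q
    (fun q o => eval (fun j => q j) (monomial (ex o) (1 : ℝ)))
  let h : MvPolynomial (Fin 3) ℝ := ∑ o, monomial (ex o) (y o)
  have hev : ∀ q : EuclideanSpace ℝ (Fin 3), eval (fun j => q j) h =
      ∑ o, y o * eval (fun j => q j) (monomial (ex o) (1 : ℝ)) := by
    intro q
    simp only [h, map_sum, eval_monomial, one_mul]
  have hcoeff : ∀ o, coeff (ex o) h = y o := by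
    intro o
    simp only [h, coeff_sum, coeff_monomial, hex.eq_iff]
    simp
  have h0 : h ≠ 0 := by
    intro h0
    apply hy0
    funext o
    rw [← hcoeff, h0, coeff_zero]; rfl
  refine ⟨h, h0, ?_, ?_, ?_⟩
  · refine totalDegree_finsetSum_le fun o _ => (totalDegree_monomial_le _ _).trans ?_
    have e2 : ∀ j, ex o j ≤ t := by
      intro j
      have := hlt o j
      split_ifs at this <;> omega
    have := e2 0; have := e2 1; have := e2 2
    rw [Finsupp.sum_fintype _ _ (fun _ => rfl), Fin.sum_univ_three]
    simp only [id]
    omega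
  · rintro ⟨q, hq⟩
    have hf0 : f ≠ 0 := by rintro rfl; exact h0 (by rw [hq, zero_mul])
    have hq0 : q ≠ 0 := by rintro rfl; exact h0 (by rw [hq, mul_zero])
    have e1 : d ≤ h.degreeOf i := by
      rw [hq, degreeOf_mul_eq hf0 hq0]; omega
    have hd0 : 0 < d := by
      rcases Nat.eq_zero_or_pos d with rfl | h
      · simp at hcard
      · exact h
    have e2 : h.degreeOf i < d := by
      rw [degreeOf_lt_iff hd0]
      intro m hm
      obtain ⟨o, -, ho⟩ := Finset.mem_biUnion.1 (support_sum hm)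
      have := Finset.mem_singleton.1 (support_monomial_subset ho)
      rw [this]
      have := hlt o i
      rw [if_pos rfl] at this
      omega
    omega
  · intro k
    simp only [hev]
    exact hy k

/-- Iterated bisection: `g` is the product of the bisecting polynomials and `c` records their signs,
which are constant on connected subsets of the nonvanishing set of `g`. -/
lemma exists_partition (f : MvPolynomial (Fin 3) ℝ) (hf : Irreducible f) (i : Fin 3) (d : ℕ)
    (hd : d ≤ f.degreeOf i) (Q : Finset (EuclideanSpace ℝ (Fin 3))) (t : ℕ → ℕ) (J : ℕ)
    (ht : ∀ j < J, 2 ^ j < min d (t j + 1) * (t j + 1) ^ 2) :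
    ∃ (g : MvPolynomial (Fin 3) ℝ) (c : EuclideanSpace ℝ (Fin 3) → (Fin J → Bool)),
      g ≠ 0 ∧ g.totalDegree ≤ ∑ j ∈ Finset.range J, 3 * t j ∧ ¬ f ∣ g ∧
      (∀ S : Set (EuclideanSpace ℝ (Fin 3)), IsPreconnected S →
        (∀ p ∈ S, eval (fun j => p j) g ≠ 0) → ∀ p ∈ S, ∀ q ∈ S, c p = c q) ∧
      ∀ s, 2 ^ J * (Q.filter fun q => eval (fun j => q j) g ≠ 0 ∧ c q = s).card ≤ Q.card := by
  induction J with
  | zero =>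
    refine ⟨1, fun _ => default, one_ne_zero, by simp, fun h => hf.not_isUnit (isUnit_of_dvd_one h),
      fun _ _ _ _ _ _ _ => rfl, fun s => ?_⟩
    rw [pow_zero, one_mul]
    exact Finset.card_filter_le _ _
  | succ J ih =>
    obtain ⟨g, c, hg0, hgd, hgf, hgc, hgQ⟩ := ih fun j hj => ht j (hj.trans (Nat.lt_succ_self J))
    obtain ⟨h, hh0, hhd, hhf, hhQ⟩ := exists_bisecting f i d (t J) hd (ι := Fin J → Bool)
      (by simpa using ht J (Nat.lt_succ_self J))
      (fun s => Q.filter fun q => eval (fun j => q j) g ≠ 0 ∧ c q = s)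
    refine ⟨g * h, fun p => Fin.snoc (α := fun _ => Bool) (c p) (decide (0 < eval (fun j => p j) h)),
      mul_ne_zero hg0 hh0, ?_, ?_, ?_, ?_⟩
    · rw [Finset.sum_range_succ]
      exact (totalDegree_mul _ _).trans (add_le_add hgd hhd)
    · intro hdvd
      rcases hf.prime.dvd_or_dvd hdvd with h1 | h1
      · exact hgf h1
      · exact hhf h1
    · intro S hS hne p hp q hq
      have hcpq : c p = c q := hgc S hS (fun r hr h0 => hne r hr (by rw [map_mul, h0, zero_mul]))
        p hp q hq
      have hcont : Continuous fun r : EuclideanSpace ℝ (Fin 3) => eval (fun j => r j) h := by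
        have h1 : Continuous fun r : EuclideanSpace ℝ (Fin 3) => (fun j => r j : Fin 3 → ℝ) := by
          fun_prop
        exact (MvPolynomial.continuous_eval h).comp h1
      have himg := hS.image _ hcont.continuousOn
      have hno : (0 : ℝ) ∉ (fun r : EuclideanSpace ℝ (Fin 3) => eval (fun j => r j) h) '' S := by
        rintro ⟨r, hr, h0⟩
        refine hne r hr ?_
        rw [map_mul]
        simp only at h0
        rw [h0, mul_zero]
      have hsign : ∀ a ∈ S, ∀ b ∈ S, 0 < eval (fun j => a j) h → 0 < eval (fun j => b j) h := by
        intro a ha b hb hpos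
        by_contra hneg
        exact hno (himg.ordConnected.out (Set.mem_image_of_mem _ hb) (Set.mem_image_of_mem _ ha)
          ⟨not_lt.1 hneg, hpos.le⟩)
      have : decide (0 < eval (fun j => p j) h) = decide (0 < eval (fun j => q j) h) := by
        rw [decide_eq_decide]
        exact ⟨hsign p hp q hq, hsign q hq p hp⟩
      simp only [hcpq, this]
    · intro s
      set A := Q.filter fun q => eval (fun j => q j) g ≠ 0 ∧ c q = Fin.init s with hA
      have hA1 : 2 ^ J * A.card ≤ Q.card := hgQ (Fin.init s)
      have hsub : 2 * (Q.filter fun q => eval (fun j => q j) (g * h) ≠ 0 ∧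
          Fin.snoc (α := fun _ => Bool) (c q) (decide (0 < eval (fun j => q j) h)) = s).card
          ≤ A.card := by
        have hdec : ∀ q ∈ Q.filter (fun q => eval (fun j => q j) (g * h) ≠ 0 ∧
            Fin.snoc (α := fun _ => Bool) (c q) (decide (0 < eval (fun j => q j) h)) = s),
            q ∈ A ∧ eval (fun j => q j) h ≠ 0 ∧
              decide (0 < eval (fun j => q j) h) = s (Fin.last J) := by
          intro q hq
          obtain ⟨h1, h2, h3⟩ := Finset.mem_filter.1 hq
          rw [map_mul] at h2
          refine ⟨Finset.mem_filter.2 ⟨h1, left_ne_zero_of_mul h2, ?_⟩, right_ne_zero_of_mul h2, ?_⟩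
          · rw [← h3, Fin.init_snoc]
          · rw [← h3, Fin.snoc_last]
        cases hs : s (Fin.last J) with
        | true =>
          refine le_trans (Nat.mul_le_mul_left 2 (Finset.card_le_card ?_)) (hhQ (Fin.init s)).1
          intro q hq
          obtain ⟨h1, h2, h3⟩ := hdec q hq
          rw [hs] at h3
          exact Finset.mem_filter.2 ⟨h1, of_decide_eq_true h3⟩
        | false =>
          refine le_trans (Nat.mul_le_mul_left 2 (Finset.card_le_card ?_)) (hhQ (Fin.init s)).2
          intro q hq
          obtain ⟨h1, h2, h3⟩ := hdec q hq
          rw [hs] at h3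
          exact Finset.mem_filter.2
            ⟨h1, lt_of_le_of_ne (not_lt.1 (of_decide_eq_false h3)) h2⟩
      calc 2 ^ (J + 1) * _ = 2 ^ J * (2 * _) := by rw [pow_succ, mul_assoc]
        _ ≤ 2 ^ J * A.card := Nat.mul_le_mul_left _ hsub
        _ ≤ Q.card := hA1

/-- Degrees for the bisection steps: a geometric progression with ratio `4/5` read backwards
(`(5/4)^3 < 2`), with total at most `E`. -/
lemma exists_degrees (D E d J : ℕ) (hD : 1 ≤ D) (hDE : D ≤ E) (hd : D ≤ 3 * d)
    (hJ : 0 < J → 3375 * 2 ^ (J - 1) ≤ D * E ^ 2) :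
    ∃ t : ℕ → ℕ, (∀ j < J, 2 ^ j < min d (t j + 1) * (t j + 1) ^ 2) ∧
      ∑ j ∈ Finset.range J, 3 * t j ≤ E := by
  refine ⟨fun j => ⌊(E / 15 : ℝ) * (4 / 5) ^ (J - 1 - j)⌋₊, ?_, ?_⟩
  · intro j hj
    set r := J - 1 - j with hr
    set w : ℝ := (E / 15 : ℝ) * (4 / 5) ^ r with hw
    set T : ℕ := ⌊w⌋₊ with hT
    have hE0 : (0 : ℝ) < E := by exact_mod_cast lt_of_lt_of_le hD hDE
    have hw0 : 0 < w := by positivity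
    have hlt : w < T + 1 := Nat.lt_floor_add_one w
    have hJ' : (3375 : ℝ) * 2 ^ (J - 1) ≤ D * E ^ 2 := by exact_mod_cast hJ (by omega)
    have hD' : (1 : ℝ) ≤ D := by exact_mod_cast hD
    have hDE' : (D : ℝ) ≤ E := by exact_mod_cast hDE
    have hd' : (D : ℝ) ≤ 3 * d := by exact_mod_cast hd
    have hJr : (2 : ℝ) ^ (J - 1) = 2 ^ j * 2 ^ r := by
      rw [← pow_add]; congr 1; omega
    have hpow : (1 : ℝ) ≤ 2 ^ r * ((4 / 5) ^ r) ^ 3 := by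
      rw [← pow_mul, mul_comm r 3, pow_mul, ← mul_pow]
      exact one_le_pow₀ (by norm_num)
    have hρ1 : ((4 / 5 : ℝ) ^ r) ≤ 1 := pow_le_one₀ (by norm_num) (by norm_num)
    have hρ0 : 0 < ((4 / 5 : ℝ) ^ r) := by positivity
    have hbase : (2 : ℝ) ^ j ≤ D * E ^ 2 / 3375 * ((4 / 5) ^ r) ^ 3 := by
      have h1 : (2 : ℝ) ^ j * 2 ^ r ≤ D * E ^ 2 / 3375 := by
        rw [← hJr]; linarith
      calc (2 : ℝ) ^ j = 2 ^ j * 1 := by ring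
        _ ≤ 2 ^ j * (2 ^ r * ((4 / 5) ^ r) ^ 3) := by gcongr
        _ = (2 ^ j * 2 ^ r) * ((4 / 5) ^ r) ^ 3 := by ring
        _ ≤ _ := by gcongr
    have key : ∀ a : ℝ, (D : ℝ) / 15 * (4 / 5) ^ r ≤ a → 0 < a → (2 : ℝ) ^ j < a * (T + 1) ^ 2 := by
      intro a ha ha0
      calc (2 : ℝ) ^ j ≤ D * E ^ 2 / 3375 * ((4 / 5) ^ r) ^ 3 := hbase
        _ = (D / 15 * (4 / 5) ^ r) * w ^ 2 := by rw [hw]; ring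
        _ ≤ a * w ^ 2 := by gcongr
        _ < a * (T + 1) ^ 2 := by gcongr
    have hgoal : (2 : ℝ) ^ j < (min d (T + 1) : ℕ) * ((T : ℝ) + 1) ^ 2 := by
      apply key
      · rw [Nat.cast_min, le_min_iff]
        constructor
        · have : (D : ℝ) / 15 * (4 / 5) ^ r ≤ D / 15 := mul_le_of_le_one_right (by positivity) hρ1
          linarith
        · have : (D : ℝ) / 15 * (4 / 5) ^ r ≤ w := by rw [hw]; gcongr
          push_cast
          linarith
      · have : 0 < min d (T + 1) := by rw [lt_min_iff]; omega
        exact_mod_cast this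
    exact_mod_cast hgoal
  · have hgeo : ∑ j ∈ Finset.range J, ((4 / 5 : ℝ)) ^ (J - 1 - j) ≤ 5 := by
      rw [Finset.sum_range_reflect (fun k => (4 / 5 : ℝ) ^ k) J, geom_sum_eq (by norm_num)]
      have : (0 : ℝ) ≤ (4 / 5) ^ J := by positivity
      rw [div_le_iff_of_neg (by norm_num)]
      linarith
    have : ((∑ j ∈ Finset.range J, 3 * ⌊(E / 15 : ℝ) * (4 / 5) ^ (J - 1 - j)⌋₊ : ℕ) : ℝ) ≤ E := by
      push_cast
      calc ∑ j ∈ Finset.range J, (3 : ℝ) * (⌊(E / 15 : ℝ) * (4 / 5) ^ (J - 1 - j)⌋₊ : ℝ)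
          ≤ ∑ j ∈ Finset.range J, (3 : ℝ) * ((E / 15 : ℝ) * (4 / 5) ^ (J - 1 - j)) := by
            refine Finset.sum_le_sum fun j _ => ?_
            gcongr
            exact Nat.floor_le (by positivity)
        _ = (E / 5 : ℝ) * ∑ j ∈ Finset.range J, (4 / 5 : ℝ) ^ (J - 1 - j) := by
            rw [Finset.mul_sum]
            exact Finset.sum_congr rfl fun j _ => by ring
        _ ≤ (E / 5 : ℝ) * 5 := by gcongr
        _ = E := by ring
    exact_mod_cast this

theorem coprime_polynomial_partition :
    ∃ C : ℝ, 1 ≤ C ∧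
      ∀ (f : MvPolynomial (Fin 3) ℝ) (D E : ℕ),
        Irreducible f → f.totalDegree = D → 1 ≤ D → D ≤ E →
      ∀ Q : Finset (EuclideanSpace ℝ (Fin 3)),
        ∃ g : MvPolynomial (Fin 3) ℝ, g ≠ 0 ∧ g.totalDegree ≤ E ∧
          (¬ ∃ h : MvPolynomial (Fin 3) ℝ, 0 < h.totalDegree ∧ h ∣ f ∧ h ∣ g) ∧
          ∀ x : EuclideanSpace ℝ (Fin 3),
            MvPolynomial.eval (fun i => x i) g ≠ 0 →
            ((Q.filter fun q =>
                q ∈ connectedComponentIn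
                  {p : EuclideanSpace ℝ (Fin 3) |
                    MvPolynomial.eval (fun i => p i) g ≠ 0} x).card : ℝ)
              ≤ C * (Q.card : ℝ) / ((D : ℝ) * (E : ℝ) ^ 2) := by
  refine ⟨3375, by norm_num, ?_⟩
  intro f D E hf hfD hD hDE Q
  obtain ⟨i, hi⟩ := exists_degreeOf_ge f hf.ne_zero
  -- the number of bisections: the least `J` with `D E² < 3375 · 2 ^ J`
  have hex : ∃ J : ℕ, D * E ^ 2 < 3375 * 2 ^ J :=
    ⟨D * E ^ 2, by have := Nat.lt_two_pow_self (n := D * E ^ 2); omega⟩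
  set J := Nat.find hex with hJdef
  have hJ1 : D * E ^ 2 < 3375 * 2 ^ J := Nat.find_spec hex
  have hJ2 : 0 < J → 3375 * 2 ^ (J - 1) ≤ D * E ^ 2 := fun h =>
    not_lt.1 (Nat.find_min hex (m := J - 1) (by omega))
  obtain ⟨t, ht, hsum⟩ := exists_degrees D E (f.degreeOf i) J hD hDE (by omega) hJ2
  obtain ⟨g, c, hg0, hgd, hgf, hgc, hgQ⟩ := exists_partition f hf i _ le_rfl Q t J ht
  refine ⟨g, hg0, hgd.trans hsum, ?_, ?_⟩
  · rintro ⟨h, hpos, hhf, hhg⟩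
    rcases hf.dvd_iff.1 hhf with hu | ha
    · obtain ⟨r, -, rfl⟩ := MvPolynomial.isUnit_iff_eq_C_of_isReduced.1 hu
      simp at hpos
    · exact hgf (ha.dvd.trans hhg)
  · intro x hx
    have hcc := isPreconnected_connectedComponentIn
      (F := {p : EuclideanSpace ℝ (Fin 3) | eval (fun i => p i) g ≠ 0}) (x := x)
    have hsubset := connectedComponentIn_subset
      {p : EuclideanSpace ℝ (Fin 3) | eval (fun i => p i) g ≠ 0} x
    have hle := Finset.card_le_card (s := Q.filter fun q => q ∈ connectedComponentIn
        {p : EuclideanSpace ℝ (Fin 3) | eval (fun i => p i) g ≠ 0} x)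
      (t := Q.filter fun q => eval (fun j => q j) g ≠ 0 ∧ c q = c x) (by
        intro q hq
        obtain ⟨h1, h2⟩ := Finset.mem_filter.1 hq
        exact Finset.mem_filter.2 ⟨h1, hsubset h2,
          hgc _ hcc (fun p hp => hsubset hp) q h2 x (mem_connectedComponentIn hx)⟩)
    have hmain := (Nat.mul_le_mul_left (2 ^ J) hle).trans (hgQ (c x))
    set n := (Q.filter fun q => q ∈ connectedComponentIn
        {p : EuclideanSpace ℝ (Fin 3) | eval (fun i => p i) g ≠ 0} x).card
    have hE0 : 0 < E := by omega
    rw [le_div_iff₀ (by positivity)]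
    have : n * (D * E ^ 2) ≤ 3375 * Q.card := by
      calc n * (D * E ^ 2) ≤ n * (3375 * 2 ^ J) := Nat.mul_le_mul_left _ hJ1.le
        _ = 3375 * (2 ^ J * n) := by ring
        _ ≤ 3375 * Q.card := Nat.mul_le_mul_left _ hmain
    exact_mod_cast this
end

section
/- Let f and g be nonzero real polynomials in three variables. Suppose there exist a nonempty open set U ⊆ ℝ² and a continuous injective map φ : U → ℝ³ whose image is contained in Z(f) ∩ Z(g). Then f and g have a common nonconstant factor. -/
/-! The proof has an algebraic half and a topological half.

Algebra: suppose `f` and `g` have no common nonconstant factor. By Gauss's lemma they stay coprime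
when regarded as one-variable polynomials over the fraction field of the ring of polynomials in two
chosen variables; clearing denominators in a Bézout identity gives a nonzero polynomial in those two
variables that vanishes on `Z(f) ∩ Z(g)` (`exists_eliminant_pair`). Applying this to the pairs
`(j, i)` for all `j ≠ i` shows that, for each coordinate `i`, all but finitely many planes
`{p | p i = a}` meet `Z(f) ∩ Z(g)` in a finite set (`exists_finite_slices`).

Topology: shrinking `U` to a disc and reparametrizing, `φ` may be taken to be defined on the whole
plane. If a coordinate of `φ` were nonconstant, it would take an intermediate value `a` whose slice
is finite. As `φ` is injective, the fibre over `a` would then be finite, so its complement in the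
plane would be connected, against the intermediate value theorem. Hence all coordinates are
constant, which contradicts injectivity. -/

open Polynomial in
/-- Elimination of the variable of `R[X]`: coprime polynomials over a UFD have a nonzero constant
in the ideal they generate. -/
lemma exists_C_mem_span_of_isRelPrime {R : Type*} [CommRing R] [IsDomain R]
    [UniqueFactorizationMonoid R] {f g : R[X]} (h : IsRelPrime f g) :
    ∃ (r : R) (a b : R[X]), r ≠ 0 ∧ a * f + b * g = C r := by
  let K := FractionRing R
  let : NormalizedGCDMonoid R := Nonempty.some inferInstance
  have hrel : IsRelPrime (f.map (algebraMap R K)) (g.map (algebraMap R K)) := by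
    intro d hdf hdg
    -- the primitive part of `d`, after clearing denominators, divides `f` and `g` over `R`
    have hd0 : d ≠ 0 := by
      rintro rfl
      rw [zero_dvd_iff, Polynomial.map_eq_zero_iff (IsFractionRing.injective R K)] at hdf hdg
      subst hdf hdg
      exact not_isUnit_zero (h dvd_rfl dvd_rfl)
    set D := IsLocalization.integerNormalization (nonZeroDivisors R) d with hD
    obtain ⟨c, c0, hc⟩ := IsLocalization.integerNormalization_spec (nonZeroDivisors R) d
    have hdvd : D.primPart.map (algebraMap R K) ∣ d := by
      have h1 : D.primPart.map (algebraMap R K) ∣ D.map (algebraMap R K) :=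
        Polynomial.map_dvd _ (D.primPart_dvd)
      have h2 : D.map (algebraMap R K) = C (algebraMap R K c) * d := by
        rw [← Polynomial.smul_eq_C_mul, algebraMap_smul]; exact hc
      rw [h2] at h1
      refine (IsUnit.dvd_mul_left ?_).mp h1
      refine Polynomial.isUnit_C.mpr (isUnit_iff_ne_zero.mpr ?_)
      exact IsFractionRing.to_map_ne_zero_of_mem_nonZeroDivisors c0
    exact isUnit_or_eq_zero_of_isUnit_integerNormalization_primPart hd0
      (h (D.isPrimitive_primPart.dvd_of_fraction_map_dvd_fraction_map (hdvd.trans hdf))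
        (D.isPrimitive_primPart.dvd_of_fraction_map_dvd_fraction_map (hdvd.trans hdg)))
  obtain ⟨a, b, hab⟩ := hrel.isCoprime
  obtain ⟨s, s0, hs⟩ := IsLocalization.integerNormalization_spec (nonZeroDivisors R) a
  obtain ⟨t, t0, ht⟩ := IsLocalization.integerNormalization_spec (nonZeroDivisors R) b
  rw [← algebraMap_smul K, Polynomial.smul_eq_C_mul] at hs ht
  refine ⟨s * t, C t * IsLocalization.integerNormalization (nonZeroDivisors R) a,
    C s * IsLocalization.integerNormalization (nonZeroDivisors R) b,
    mul_ne_zero (nonZeroDivisors.ne_zero s0) (nonZeroDivisors.ne_zero t0), ?_⟩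
  apply Polynomial.map_injective _ (IsFractionRing.injective R K)
  simp only [Polynomial.map_add, Polynomial.map_mul, Polynomial.map_C, map_mul]
  rw [hs, ht]
  linear_combination (C (algebraMap R K s) * C (algebraMap R K t)) * hab

lemma isRelPrime_map_equiv {A B : Type*} [CommRing A] [CommRing B] (e : A ≃+* B) {f g : A}
    (h : IsRelPrime f g) : IsRelPrime (e f) (e g) := by
  intro d hf hg
  have := h (d := e.symm d) (by simpa using map_dvd e.symm hf) (by simpa using map_dvd e.symm hg)
  simpa using this.map e

open MvPolynomial in
/-- The projection of `Z(f) ∩ Z(g)` along the first coordinate lies on a plane algebraic curve. -/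
lemma exists_eliminant {f g : MvPolynomial (Fin 3) ℝ} (h : IsRelPrime f g) :
    ∃ r : MvPolynomial (Fin 2) ℝ, r ≠ 0 ∧
      ∀ p : Fin 3 → ℝ, eval p f = 0 → eval p g = 0 → eval (fun i => p i.succ) r = 0 := by
  obtain ⟨r, a, b, hr, hab⟩ := exists_C_mem_span_of_isRelPrime
    (isRelPrime_map_equiv (finSuccEquiv ℝ 2).toRingEquiv h)
  refine ⟨r, hr, fun p hf hg => ?_⟩
  have key : ∀ q : MvPolynomial (Fin 3) ℝ, eval p q =
      Polynomial.eval (p 0) (Polynomial.map (eval fun i => p i.succ) (finSuccEquiv ℝ 2 q)) := by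
    intro q
    rw [← eval_eq_eval_mv_eval']
    congr 2
    ext i
    cases i using Fin.cases <;> rfl
  have := congrArg (fun q => Polynomial.eval (p 0) (Polynomial.map (eval fun i => p i.succ) q)) hab
  simp only [Polynomial.map_add, Polynomial.map_mul, Polynomial.eval_add, Polynomial.eval_mul,
    Polynomial.map_C, Polynomial.eval_C] at this
  rw [← this]
  change _ * Polynomial.eval _ (Polynomial.map _ (finSuccEquiv ℝ 2 f)) +
    _ * Polynomial.eval _ (Polynomial.map _ (finSuccEquiv ℝ 2 g)) = 0
  rw [← key f, ← key g, hf, hg]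
  ring

open MvPolynomial in
/-- `exists_eliminant` after a permutation of the variables. -/
lemma exists_eliminant_pair {f g : MvPolynomial (Fin 3) ℝ} (h : IsRelPrime f g)
    {i j : Fin 3} (hij : i ≠ j) :
    ∃ r : MvPolynomial (Fin 2) ℝ, r ≠ 0 ∧
      ∀ p : Fin 3 → ℝ, eval p f = 0 → eval p g = 0 → eval ![p i, p j] r = 0 := by
  obtain ⟨e, he1, he2⟩ : ∃ e : Equiv.Perm (Fin 3), e 1 = i ∧ e 2 = j := by
    revert i j; decide
  obtain ⟨r, hr, H⟩ := exists_eliminant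
    (isRelPrime_map_equiv (renameEquiv ℝ e.symm).toRingEquiv h)
  refine ⟨r, hr, fun p hf hg => ?_⟩
  have hcomp : (p ∘ e) ∘ e.symm = p := by ext; simp
  have := H (p ∘ e) (by simpa [eval_rename, hcomp] using hf)
    (by simpa [eval_rename, hcomp] using hg)
  convert this using 2
  congr 1
  ext k
  fin_cases k
  · simp [he1]
  · simp [he2]

open MvPolynomial in
/-- A plane algebraic curve meets all but finitely many lines `{(b, a) | b : ℝ}` in finitely many
points. -/
lemma finite_setOf_infinite_slice {r : MvPolynomial (Fin 2) ℝ} (hr : r ≠ 0) :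
    {a : ℝ | {b : ℝ | eval ![b, a] r = 0}.Infinite}.Finite := by
  set R := finSuccEquiv ℝ 1 r with hR
  have hR0 : R ≠ 0 := by simpa [hR] using hr
  set l := uniqueAlgEquiv ℝ (Fin 1) R.leadingCoeff with hl
  have hl0 : l ≠ 0 := 
    (map_ne_zero_iff _ (uniqueAlgEquiv ℝ (Fin 1)).injective).mpr
      (Polynomial.leadingCoeff_ne_zero.mpr hR0)
  refine (Polynomial.finite_setOfPred_isRoot hl0).subset fun a ha => ?_
  by_contra hla
  have hmap : R.map (eval ![a]) ≠ 0 := by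
    intro h0
    apply hla
    have h1 : eval ![a] R.leadingCoeff = 0 := by
      simpa using congrArg (fun q => q.coeff R.natDegree) h0
    have h2 := eval₂_uniqueAlgEquiv (R := ℝ) (σ := Fin 1) (f := R.leadingCoeff)
      (φ := RingHom.id ℝ) (a := ![a])
    simp only [Set.mem_ofPred_eq, Polynomial.IsRoot]
    rw [← hl] at h2
    have h3 : (![a] : Fin 1 → ℝ) default = a := rfl
    rw [h3] at h2
    exact h2.trans h1
  refine ha ((Polynomial.finite_setOfPred_isRoot hmap).subset fun b hb => ?_)
  have := eval_eq_eval_mv_eval' ![a] b r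
  exact this.symm.trans hb

open MvPolynomial in
/-- The common zero set of two coprime polynomials in three variables meets all but finitely many
planes parallel to a coordinate plane in finitely many points. -/
lemma exists_finite_slices {f g : MvPolynomial (Fin 3) ℝ} (h : IsRelPrime f g) (i : Fin 3) :
    ∃ S : Set ℝ, S.Finite ∧ ∀ a ∉ S,
      {p : Fin 3 → ℝ | eval p f = 0 ∧ eval p g = 0 ∧ p i = a}.Finite := by
  have hex : ∀ j : Fin 3, ∃ S : Set ℝ, S.Finite ∧ ∀ a ∉ S, ∃ T : Set ℝ, T.Finite ∧
      ∀ p : Fin 3 → ℝ, eval p f = 0 → eval p g = 0 → p i = a → p j ∈ T := by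
    intro j
    by_cases hij : j = i
    · exact ⟨∅, Set.finite_empty, fun a _ => ⟨{a}, Set.finite_singleton a,
        fun p _ _ hp => by simp [hij, hp]⟩⟩
    obtain ⟨r, hr, H⟩ := exists_eliminant_pair h hij
    refine ⟨_, finite_setOf_infinite_slice hr, fun a ha => ⟨_, Set.not_infinite.mp ha, ?_⟩⟩
    rintro p hf hg rfl
    exact H p hf hg
  choose S hS T using hex
  refine ⟨⋃ j, S j, Set.finite_iUnion hS, fun a ha => ?_⟩
  simp only [Set.mem_iUnion, not_exists] at ha
  choose T hT hmem using fun j => T j a (ha j)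
  refine (Set.Finite.pi' hT).subset ?_
  rintro p ⟨hf, hg, hp⟩ j
  exact hmem j p hf hg hp

/-- A continuous real function on the plane is constant if all but finitely many of its fibres are
finite: removing a finite fibre leaves the plane connected. -/
lemma eq_of_finite_fibers {u : EuclideanSpace ℝ (Fin 2) → ℝ} (hu : Continuous u) {S : Set ℝ}
    (hS : S.Finite) (hfib : ∀ a ∉ S, (u ⁻¹' {a}).Finite) (x y : EuclideanSpace ℝ (Fin 2)) :
    u x = u y := by
  by_contra hne
  wlog hlt : u x < u y generalizing x y
  · exact this y x (Ne.symm hne) (lt_of_le_of_ne (not_lt.mp hlt) (Ne.symm hne))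
  obtain ⟨a, ⟨hxa, hay⟩, haS⟩ := ((Set.Ioo_infinite hlt).sdiff hS).nonempty
  have hconn : IsConnected (u ⁻¹' {a})ᶜ := by
    refine (hfib a haS).countable.isConnected_compl_of_one_lt_rank ?_
    rw [← Module.finrank_eq_rank, finrank_euclideanSpace_fin]
    norm_num
  obtain ⟨z, hz, hza⟩ := hconn.isPreconnected.intermediate_value (a := x) (b := y)
    (by simpa using hxa.ne) (by simpa using hay.ne') hu.continuousOn ⟨hxa.le, hay.le⟩
  exact hz hza

theorem common_factor_from_surface_patch
    (f g : MvPolynomial (Fin 3) ℝ) (hf : f ≠ 0) (hg : g ≠ 0)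
    (U : Set (EuclideanSpace ℝ (Fin 2))) (hU : U.Nonempty) (hUopen : IsOpen U)
    (φ : EuclideanSpace ℝ (Fin 2) → EuclideanSpace ℝ (Fin 3))
    (hcont : ContinuousOn φ U) (hinj : Set.InjOn φ U)
    (himg : φ '' U ⊆ {p : EuclideanSpace ℝ (Fin 3) |
        MvPolynomial.eval (fun i => p i) f = 0 ∧
        MvPolynomial.eval (fun i => p i) g = 0}) :
    ∃ h : MvPolynomial (Fin 3) ℝ, 0 < h.totalDegree ∧ h ∣ f ∧ h ∣ g := by
  by_contra! hno
  have hrel : IsRelPrime f g := by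
    intro d hdf hdg
    have hdeg : d.totalDegree = 0 := by
      by_contra hd
      exact hno d (Nat.pos_of_ne_zero hd) hdf hdg
    rw [MvPolynomial.totalDegree_eq_zero_iff_eq_C] at hdeg
    have hd0 : d ≠ 0 := ne_zero_of_dvd_ne_zero hf hdf
    rw [hdeg]
    refine (isUnit_iff_ne_zero.mpr fun h0 => hd0 ?_).map MvPolynomial.C
    rw [hdeg, h0, map_zero]
  obtain ⟨c, hc⟩ := hU
  obtain ⟨ε, hε, hball⟩ := Metric.isOpen_iff.mp hUopen c hc
  -- `B` maps the whole plane homeomorphically onto a disc contained in `U`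
  let B := OpenPartialHomeomorph.univBall c ε
  have hBU : ∀ x, B x ∈ U := fun x => hball <| by
    rw [← OpenPartialHomeomorph.univBall_target c hε]
    exact B.map_source (by simp [B])
  have hBinj : Function.Injective B := fun x y hxy =>
    B.injOn (by simp [B]) (by simp [B]) hxy
  obtain ⟨ψ, hψ, hψinj, hψimg⟩ : ∃ ψ : EuclideanSpace ℝ (Fin 2) → EuclideanSpace ℝ (Fin 3),
      Continuous ψ ∧ Function.Injective ψ ∧ ∀ x, ψ x ∈ φ '' U :=
    ⟨φ ∘ B, hcont.comp_continuous (OpenPartialHomeomorph.continuous_univBall c ε) hBU,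
      fun x y hxy => hBinj (hinj (hBU x) (hBU y) hxy), fun x => ⟨B x, hBU x, rfl⟩⟩
  have hcoord : Function.Injective (fun x (j : Fin 3) => ψ x j) :=
    fun x y hxy => hψinj (by ext j; exact congrFun hxy j)
  have hconst : ∀ x y, ψ x = ψ y := by
    intro x y
    ext i
    obtain ⟨S, hS, hfin⟩ := exists_finite_slices hrel i
    have hcont_i : Continuous fun x => ψ x i := by fun_prop
    exact eq_of_finite_fibers hcont_i hS (fun a ha =>
      ((hfin a ha).preimage hcoord.injOn).subset fun x hx =>
        ⟨(himg (hψimg x)).1, (himg (hψimg x)).2, hx⟩) x y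
  obtain ⟨x, y, hxy⟩ := exists_pair_ne (EuclideanSpace ℝ (Fin 2))
  exact hxy (hψinj (hconst x y))
end

section
/- There exists an absolute constant C > 0 such that the following holds. Let f ∈ ℝ[x,y,z] be a polynomial of total degree D ≥ 1, let a ∈ ℝ³, and let σ = {x ∈ ℝ³ : ‖x − a‖ = 1} be the unit sphere centered at a. If f does not vanish identically on σ, then the set of connected components of σ \ Z(f) is finite and has cardinality at most C · D². -/
/-!
Choose a point `q` of the sphere with `f q ≠ 0` and project stereographically from `q`. Clearing
denominators turns `f` into a plane polynomial `G` of degree at most `d = 2D`. All components of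
the sphere minus `Z(f)` except possibly that of `q` give distinct components of `{G ≠ 0}` in the
plane. Since `f` does not vanish near `q`, `G` does not vanish near infinity, so at most one
component of `{G ≠ 0}` is unbounded (`plane_bound'`).

On a bounded component `U`, `|G|` is positive inside and zero on the boundary, so for a small linear
perturbation `H = G + a x + b y` the function `|H|` still has an interior maximum, which is a
critical point of `H` (`plane_bound`). For generic `a, b` the partial derivatives of `H` are coprime:
fixing `b`, each of the finitely many irreducible factors of `∂H/∂y` divides `∂G/∂x + a` for at most
one `a` (`finite_bad`, `exists_perturb`). Then `H` has at most `d ^ 2` critical points by the weak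
form of Bézout's theorem (`bezout`), which is a dimension count in spaces of polynomials of bounded
degree. Altogether there are at most `(2D) ^ 2 + 2 ≤ 6 D ^ 2` components.
-/
namespace SphereComp
open MvPolynomial

/-! ### A weak form of Bézout's theorem -/

/-- Real polynomials in two variables. -/
abbrev R2 := MvPolynomial (Fin 2) ℝ

/-- The space of plane polynomials of degree at most `k` has dimension `(k + 1) (k + 2) / 2`. -/
theorem two_mul_finrank (k : ℕ) :
    2 * Module.finrank ℝ (restrictTotalDegree (Fin 2) ℝ k) = (k + 1) * (k + 2) := by
  -- Exponents `n` are encoded as pairs `(n 0 + n 1, n 0)`.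
  have e : ↥{n : Fin 2 →₀ ℕ | (n.sum fun _ e => e) ≤ k} ≃
      ↥((Finset.range (k + 1)).sigma fun i => Finset.range (i + 1)) :=
    { toFun := fun n => ⟨⟨n.1 0 + n.1 1, n.1 0⟩, by
        have := n.2
        rw [Set.mem_ofPred_eq, Finsupp.sum_fintype _ _ (fun _ => rfl), Fin.sum_univ_two] at this
        simp only [Finset.mem_sigma, Finset.mem_range]
        omega⟩
      invFun := fun p => ⟨Finsupp.equivFunOnFinite.symm ![p.1.2, p.1.1 - p.1.2], by
        have := p.2
        simp only [Finset.mem_sigma, Finset.mem_range] at this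
        simp [Finsupp.sum_fintype, Fin.sum_univ_two]
        omega⟩
      left_inv := fun n => by
        ext i
        fin_cases i <;> simp
      right_inv := fun p => by
        obtain ⟨⟨i, j⟩, h⟩ := p
        simp only [Finset.mem_sigma, Finset.mem_range] at h
        simp
        omega }
  rw [restrictTotalDegree, Module.finrank_eq_nat_card_basis
    (basisRestrictSupport ℝ {n : Fin 2 →₀ ℕ | (n.sum fun _ e => e) ≤ k}), Nat.card_congr e]
  rw [Nat.card_eq_fintype_card, Fintype.card_coe, Finset.card_sigma]
  simp only [Finset.card_range]
  clear e
  induction k with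
  | zero => simp
  | succ k ih => rw [Finset.sum_range_succ, mul_add, ih]; ring

/-- Any point can be separated from the other points of a finite set `S` by a polynomial of degree
at most `S.card`, namely a product of linear forms. -/
theorem exists_interp (S : Finset (Fin 2 → ℝ)) (s : Fin 2 → ℝ) :
    ∃ p : R2, p.totalDegree ≤ S.card ∧ eval s p ≠ 0 ∧ ∀ t ∈ S, t ≠ s → eval t p = 0 := by
  classical
  have h : ∀ t : Fin 2 → ℝ, ∃ l : R2, l.totalDegree ≤ 1 ∧ (t ≠ s → eval s l ≠ 0 ∧ eval t l = 0) := by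
    intro t
    by_cases hts : t = s
    · exact ⟨0, by simp, fun h => absurd hts h⟩
    · obtain ⟨i, hi⟩ := Function.ne_iff.mp hts
      refine ⟨X i - C (t i), (totalDegree_sub_C_le _ _).trans (by simp), fun _ => ?_⟩
      simp only [map_sub, eval_X, eval_C, sub_self, and_true]
      exact sub_ne_zero.mpr (Ne.symm hi)
  choose l hl hl' using h
  refine ⟨∏ t ∈ S.erase s, l t, ?_, ?_, ?_⟩
  · refine (totalDegree_finsetProd _ _).trans ?_
    refine (Finset.sum_le_card_nsmul _ _ 1 fun t _ => hl t).trans ?_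
    simpa using Finset.card_erase_le
  · rw [map_prod, Finset.prod_ne_zero_iff]
    exact fun t ht => (hl' t (Finset.ne_of_mem_erase ht)).1
  · intro t ht hts
    rw [map_prod]
    exact Finset.prod_eq_zero (Finset.mem_erase.mpr ⟨hts, ht⟩) (hl' t hts).2

theorem finrank_map_mul (P : R2) (hP : P ≠ 0) (V : Submodule ℝ R2) :
    Module.finrank ℝ (V.map (LinearMap.mulLeft ℝ P)) = Module.finrank ℝ V :=
  (LinearEquiv.finrank_eq (Submodule.equivMapOfInjective (LinearMap.mulLeft ℝ P)
    (fun _ _ h => mul_left_cancel₀ hP h) V)).symm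

/-- Two coprime plane polynomials of degrees `m` and `n` have at most `m * n` common zeros. With
`V k` the polynomials of degree at most `k`, evaluation at a set `S` of common zeros is onto on
`V (m + n + r)` for `r = S.card` and kills `P * V (n + r) + Q * V (m + r)`; by coprimality those two
summands meet inside `P * Q * V r`. -/
theorem bezout (P Q : R2) (hP : P ≠ 0) (hQ : Q ≠ 0) (h : IsRelPrime P Q)
    (S : Finset (Fin 2 → ℝ)) (hS : ∀ s ∈ S, eval s P = 0 ∧ eval s Q = 0) :
    S.card ≤ P.totalDegree * Q.totalDegree := by
  classical
  set m := P.totalDegree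
  set n := Q.totalDegree
  set r := S.card
  set V : ℕ → Submodule ℝ R2 := fun k => restrictTotalDegree (Fin 2) ℝ k
  have memV : ∀ k p, p ∈ V k ↔ p.totalDegree ≤ k := fun k p => mem_restrictTotalDegree _ _ _
  have fin : ∀ k, Module.Finite ℝ (V k) := fun k => by dsimp only [V]; infer_instance
  let k := m + n + r
  let ev : V k →ₗ[ℝ] (S → ℝ) :=
    { toFun := fun p s => eval s.1 p.1
      map_add' := fun p q => by ext; simp
      map_smul' := fun c p => by ext; simp }
  have ev_surj : Function.Surjective ev := by
    choose L hL1 hL2 hL3 using exists_interp S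
    intro y
    refine ⟨⟨∑ s : S, C (y s / eval s.1 (L s)) * L s, ?_⟩, ?_⟩
    · rw [memV]
      refine totalDegree_finsetSum_le fun s _ => (totalDegree_mul _ _).trans ?_
      rw [totalDegree_C, zero_add]
      exact (hL1 s).trans (by simp [k, r])
    · ext t
      simp only [ev, LinearMap.coe_mk, AddHom.coe_mk, map_sum, map_mul, eval_C]
      rw [Finset.sum_eq_single t]
      · exact div_mul_cancel₀ _ (hL2 _)
      · intro s _ hst
        rw [hL3 s t t.2 (fun h => hst (Subtype.ext h.symm)), mul_zero]
      · simp
  have hrank := LinearMap.finrank_range_add_finrank_ker ev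
  rw [LinearMap.range_eq_top.mpr ev_surj, finrank_top, Module.finrank_fintype_fun_eq_card,
    Fintype.card_coe] at hrank
  let A := (V (n + r)).map (LinearMap.mulLeft ℝ P)
  let B := (V (m + r)).map (LinearMap.mulLeft ℝ Q)
  have hAB : A ⊔ B ≤ (LinearMap.ker ev).map (V k).subtype := by
    refine sup_le ?_ ?_
    · rintro _ ⟨a, ha, rfl⟩
      have ha' := (memV _ _).mp ha
      refine ⟨⟨P * a, (memV _ _).mpr ((totalDegree_mul _ _).trans (by simp only [k]; omega))⟩,
        ?_, rfl⟩
      ext s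
      simp [ev, (hS s s.2).1]
    · rintro _ ⟨a, ha, rfl⟩
      have ha' := (memV _ _).mp ha
      refine ⟨⟨Q * a, (memV _ _).mpr ((totalDegree_mul _ _).trans (by simp only [k]; omega))⟩,
        ?_, rfl⟩
      ext s
      simp [ev, (hS s s.2).2]
  have hinf : A ⊓ B ≤ (V r).map (LinearMap.mulLeft ℝ (P * Q)) := by
    rintro _ ⟨⟨a, ha, rfl⟩, ⟨b, hb, hab⟩⟩
    have ha' := (memV _ _).mp ha
    simp only [LinearMap.mulLeft_apply] at hab ⊢
    obtain ⟨c, rfl⟩ : Q ∣ a := h.symm.dvd_of_dvd_mul_left ⟨b, hab.symm⟩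
    refine ⟨c, (memV _ _).mpr ?_, by simp⟩
    by_cases hc : c = 0
    · simp [hc]
    · rw [totalDegree_mul_of_isDomain hQ hc] at ha'
      omega
  have h1 := Submodule.finrank_sup_add_finrank_inf_eq A B
  have h2 := Submodule.finrank_mono hAB
  have h2' := h2.trans (Submodule.finrank_map_le _ _)
  have h3 := Submodule.finrank_mono hinf
  rw [finrank_map_mul _ (mul_ne_zero hP hQ)] at h3
  rw [finrank_map_mul _ hP, finrank_map_mul _ hQ] at h1
  have e1 := two_mul_finrank k
  have e2 := two_mul_finrank (n + r)
  have e3 := two_mul_finrank (m + r)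
  have e4 := two_mul_finrank r
  simp only [V, k] at *
  nlinarith

/-- An irreducible factor of `Q` cannot divide both `P + C e` and `P + C e'` for `e ≠ e'`, since their
difference is a unit; hence all but finitely many constants make `P + C e` coprime to `Q`. -/
theorem finite_bad (P Q : R2) (hQ : Q ≠ 0) :
    {e : ℝ | ¬ IsRelPrime (P + C e) Q}.Finite := by
  classical
  -- Working in `Associates` makes the list of irreducible factors up to units finite.
  have hex : ∀ e : {e : ℝ | ¬ IsRelPrime (P + C e) Q}, ∃ z : Associates R2,
      z ∈ UniqueFactorizationMonoid.normalizedFactors (Associates.mk Q) ∧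
      z ∣ Associates.mk (P + C e.1) := by
    rintro ⟨e, he⟩
    by_contra hcon
    push Not at hcon
    refine he (WfDvdMonoid.isRelPrime_of_no_irreducible_factors (fun h => hQ h.2) ?_)
    intro z hz hzP hzQ
    obtain ⟨q, hq, hqz⟩ := UniqueFactorizationMonoid.exists_mem_normalizedFactors_of_dvd
      (a := Associates.mk Q) (p := Associates.mk z) (by simpa using hQ)
      (Associates.irreducible_mk.mpr hz) (Associates.mk_le_mk_of_dvd hzQ)
    rw [associated_iff_eq] at hqz
    exact hcon q hq (hqz ▸ Associates.mk_le_mk_of_dvd hzP)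
  choose z hz hz' using hex
  have hinj : Function.Injective z := by
    intro e e' hee
    by_contra hne
    have hirr := UniqueFactorizationMonoid.irreducible_of_normalized_factor _ (hz e)
    obtain ⟨y, hy⟩ := Associates.mk_surjective (z e)
    have d1 := hz' e
    have d2 := hz' e'
    rw [← hee, ← hy, Associates.mk_dvd_mk] at d2
    rw [← hy, Associates.mk_dvd_mk] at d1
    rw [← hy, Associates.irreducible_mk] at hirr
    have d3 := dvd_sub d1 d2
    rw [add_sub_add_left_eq_sub, ← C_sub] at d3
    refine hirr.not_isUnit (isUnit_of_dvd_unit d3 ?_)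
    exact (IsUnit.mk0 _ (sub_ne_zero.mpr fun h => hne (Subtype.ext h))).map C
  have : Finite {e : ℝ | ¬ IsRelPrime (P + C e) Q} :=
    Finite.of_injective (fun e => (⟨z e, Multiset.mem_toFinset.mpr (hz e)⟩ :
      ↥(UniqueFactorizationMonoid.normalizedFactors (Associates.mk Q)).toFinset))
      (fun a b h => hinj (by simpa using h))
  exact Set.toFinite _

/-! ### Components of the complement of a plane curve -/

open Set Filter Topology

theorem totalDegree_pderiv_le (i : Fin 2) (p : R2) :
    (pderiv i p).totalDegree ≤ p.totalDegree := by
  classical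
  refine Finset.sup_le fun m hm => ?_
  rw [mem_support_iff, coeff_pderiv] at hm
  have h1 : m + Finsupp.single i 1 ∈ p.support := by
    rw [mem_support_iff]
    exact left_ne_zero_of_mul hm
  refine le_trans ?_ (le_totalDegree h1)
  rw [Finsupp.sum_add_index' (fun _ => rfl) (fun _ _ _ => rfl)]
  exact Nat.le_add_right _ _

theorem hasDerivAt_eval_update (p : R2) (y : Fin 2 → ℝ) (i : Fin 2) :
    HasDerivAt (fun t => eval (Function.update y i t) p) (eval y (pderiv i p)) (y i) := by
  induction p using MvPolynomial.induction_on with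
  | C a => simpa using hasDerivAt_const _ _
  | add p q hp hq =>
    simp only [map_add]
    exact hp.add hq
  | mul_X p j hp =>
    have hj : HasDerivAt (fun t => Function.update y i t j) (eval y (pderiv i (X j : R2))) (y i) := by
      by_cases h : j = i
      · subst h
        simpa using hasDerivAt_id' (y j)
      · simpa [h, pderiv_X_of_ne h] using hasDerivAt_const _ _
    have := hp.mul hj
    simp only [Function.update_eq_self] at this
    simp only [map_mul, eval_X, pderiv_mul, map_add]
    convert! this using 1

theorem pderiv_eq_zero_of_isLocalMax (H : R2) (y : Fin 2 → ℝ) (i : Fin 2)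
    (hmax : IsLocalMax (fun x => eval x H ^ 2) y) (hy : eval y H ≠ 0) :
    eval y (pderiv i H) = 0 := by
  have hd := (hasDerivAt_eval_update H y i).pow 2
  have hc : ContinuousAt (fun t => Function.update y i t) (y i) := by fun_prop
  have hm : IsLocalMax (fun t => eval (Function.update y i t) H ^ 2) (y i) := by
    have h1 : Tendsto (fun t => Function.update y i t) (𝓝 (y i)) (𝓝 y) := by
      have := hc.tendsto
      rwa [Function.update_eq_self] at this
    have := h1.eventually hmax
    simpa [IsLocalMax, IsMaxFilter] using this
  have := hm.hasDerivAt_eq_zero hd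
  simpa [hy] using this

/-- Arbitrarily small linear perturbations make the two partial derivatives of `G` nonzero and
coprime. -/
theorem exists_perturb (G : R2) (η : ℝ) (hη : 0 < η) :
    ∃ a b : ℝ, |a| < η ∧ |b| < η ∧ pderiv 0 G + C a ≠ 0 ∧ pderiv 1 G + C b ≠ 0 ∧
      IsRelPrime (pderiv 0 G + C a) (pderiv 1 G + C b) := by
  -- Bad constants form finite sets, while the interval of allowed ones is infinite.
  have hfin : ∀ P : R2, {e : ℝ | P + C e = 0}.Finite := by
    intro P
    refine Set.Subsingleton.finite fun e he e' he' => ?_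
    have : (C e : R2) = C e' := add_left_cancel (he.trans he'.symm)
    exact C_injective _ _ this
  have hinf : (Ioo (-η) η).Infinite := Ioo_infinite (by linarith)
  obtain ⟨b, hb, hb'⟩ := (hinf.sdiff (hfin (pderiv 1 G))).nonempty
  obtain ⟨a, ha, ha'⟩ := (hinf.sdiff ((hfin (pderiv 0 G)).union
    (finite_bad (pderiv 0 G) (pderiv 1 G + C b) hb'))).nonempty
  simp only [mem_union, Set.mem_ofPred_eq, not_or, not_not] at ha'
  exact ⟨a, b, abs_lt.mpr ha, abs_lt.mpr hb, ha'.1, hb', ha'.2⟩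

/-- The complement of the real plane curve `G = 0`. -/
def nz (G : R2) : Set (Fin 2 → ℝ) := {x | eval x G ≠ 0}

theorem isOpen_nz (G : R2) : IsOpen (nz G) :=
  isOpen_ne_fun (continuous_eval G) continuous_const

/-- A boundary point of a component of `nz G` is a zero of `G`. -/
theorem eval_eq_zero_of_mem_closure (G : R2) (s y : Fin 2 → ℝ)
    (hy : y ∈ closure (connectedComponentIn (nz G) s)) (hy' : y ∉ connectedComponentIn (nz G) s) :
    eval y G = 0 := by
  by_contra hne
  have hW : y ∈ nz G := hne
  have ho := (isOpen_nz G).connectedComponentIn (x := y)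
  obtain ⟨z, hz1, hz2⟩ := mem_closure_iff.mp hy _ ho (mem_connectedComponentIn hW)
  rw [connectedComponentIn_eq hz2, ← connectedComponentIn_eq hz1] at hy'
  exact hy' (mem_connectedComponentIn hW)

/-- The complement of a plane curve of degree `d` has at most `d ^ 2` bounded components: each of
them contains a critical point of a common small generic linear perturbation of `G`. -/
theorem plane_bound (G : R2) (S : Finset (Fin 2 → ℝ)) (hS : ∀ s ∈ S, s ∈ nz G)
    (hb : ∀ s ∈ S, Bornology.IsBounded (connectedComponentIn (nz G) s))
    (hinj : ∀ s ∈ S, ∀ t ∈ S, connectedComponentIn (nz G) s = connectedComponentIn (nz G) t →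
      s = t) : S.card ≤ G.totalDegree ^ 2 := by
  classical
  obtain ⟨R, hR0, hR⟩ : ∃ R : ℝ, 0 < R ∧ ∀ s ∈ S, ∀ x ∈ closure (connectedComponentIn (nz G) s),
      ‖x‖ ≤ R := by
    have : Bornology.IsBounded (⋃ s ∈ S, closure (connectedComponentIn (nz G) s)) :=
      (Bornology.isBounded_biUnion_finset S).mpr fun s hs => (hb s hs).closure
    obtain ⟨R, hR⟩ := this.exists_norm_le
    exact ⟨max R 1, by positivity, fun s hs x hx =>
      (hR x (mem_biUnion hs hx)).trans (le_max_left _ _)⟩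
  obtain ⟨δ, hδ0, hδ⟩ : ∃ δ : ℝ, 0 < δ ∧ ∀ s ∈ S, δ ≤ |eval s G| := by
    rcases S.eq_empty_or_nonempty with h | h
    · exact ⟨1, one_pos, by simp [h]⟩
    · obtain ⟨s, hs, hmin⟩ := S.exists_min_image (fun s => |eval s G|) h
      exact ⟨_, abs_pos.mpr (hS s hs), hmin⟩
  obtain ⟨a, b, ha, hb', hP, hQ, hrel⟩ := exists_perturb G (δ / (8 * R)) (by positivity)
  set H : R2 := G + C a * X 0 + C b * X 1 with hH
  have hHG : ∀ x : Fin 2 → ℝ, ‖x‖ ≤ R → |eval x H - eval x G| ≤ δ / 4 := by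
    intro x hx
    have h0 : |x 0| ≤ R := (norm_le_pi_norm x 0).trans hx
    have h1 : |x 1| ≤ R := (norm_le_pi_norm x 1).trans hx
    have e : eval x H - eval x G = a * x 0 + b * x 1 := by simp [hH]; ring
    have hq : δ / (8 * R) * R = δ / 8 := by field_simp
    rw [e]
    calc |a * x 0 + b * x 1| ≤ |a| * |x 0| + |b| * |x 1| := by
          rw [← abs_mul, ← abs_mul]; exact abs_add_le _ _
      _ ≤ δ / (8 * R) * R + δ / (8 * R) * R := by gcongr
      _ = δ / 4 := by rw [hq]; ring
  -- On each closed component `|H|` is at most `δ / 4` at the boundary, but at least `3 δ / 4` at the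
  -- chosen point, so its maximum is attained in the interior.
  have hcrit : ∀ s ∈ S, ∃ y ∈ connectedComponentIn (nz G) s,
      eval y (pderiv 0 H) = 0 ∧ eval y (pderiv 1 H) = 0 := by
    intro s hs
    have hsC := mem_connectedComponentIn (hS s hs)
    have hK : IsCompact (closure (connectedComponentIn (nz G) s)) := (hb s hs).isCompact_closure
    obtain ⟨y, hy, hmax⟩ := hK.exists_isMaxOn ⟨s, subset_closure hsC⟩
      (f := fun x => eval x H ^ 2) ((continuous_eval H).pow 2).continuousOn
    have h1 : |eval s H| ≤ |eval y H| := sq_le_sq.mp (hmax (subset_closure hsC))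
    have h2 := hHG s (hR s hs s (subset_closure hsC))
    have h3 := hHG y (hR s hs y hy)
    have h4 := hδ s hs
    have h5 : |eval s G| ≤ |eval s H| + |eval s H - eval s G| := by
      have := abs_sub (eval s H) (eval s H - eval s G)
      rwa [sub_sub_cancel] at this
    have hyC : y ∈ connectedComponentIn (nz G) s := by
      by_contra hy'
      rw [eval_eq_zero_of_mem_closure G s y hy hy', sub_zero] at h3
      linarith
    have hlm : IsLocalMax (fun x => eval x H ^ 2) y :=
      (hmax.on_subset subset_closure).isLocalMax
        ((isOpen_nz G).connectedComponentIn.mem_nhds hyC)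
    have hy0 : eval y H ≠ 0 := by
      intro h
      rw [h, abs_zero] at h1
      linarith
    exact ⟨y, hyC, pderiv_eq_zero_of_isLocalMax H y 0 hlm hy0,
      pderiv_eq_zero_of_isLocalMax H y 1 hlm hy0⟩
  choose! y hyC hy0 hy1 using hcrit
  have hyinj : Set.InjOn y S := by
    intro s hs t ht hst
    refine hinj s hs t ht ?_
    rw [connectedComponentIn_eq (hyC s hs), hst, ← connectedComponentIn_eq (hyC t ht)]
  have hp0 : pderiv 0 H = pderiv 0 G + C a := by
    simp [hH]
  have hp1 : pderiv 1 H = pderiv 1 G + C b := by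
    simp [hH]
  rw [← hp0, ← hp1] at hrel
  have key := bezout _ _ (hp0 ▸ hP) (hp1 ▸ hQ) hrel (S.image y) (by
    intro z hz
    obtain ⟨s, hs, rfl⟩ := Finset.mem_image.mp hz
    exact ⟨hy0 s hs, hy1 s hs⟩)
  rw [Finset.card_image_of_injOn hyinj] at key
  refine key.trans ?_
  rw [sq, hp0, hp1]
  gcongr <;>
  · refine (totalDegree_add _ _).trans (max_le (totalDegree_pderiv_le _ _) ?_)
    simp

theorem isPreconnected_norm_gt (R : ℝ) (hR : 0 ≤ R) :
    IsPreconnected {x : Fin 2 → ℝ | R < ‖x‖} := by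
  have h0 : IsPreconnected ({0}ᶜ : Set (Fin 2 → ℝ)) :=
    (isConnected_compl_singleton_of_one_lt_rank (by simp) 0).isPreconnected
  -- The set is the image of `(R, ∞) × (ℝ² \ {0})` under `(t, x) ↦ (t / ‖x‖) x`.
  have h1 := (isPreconnected_Ioi (a := R)).prod h0
  have h2 := h1.image (fun p => (p.1 / ‖p.2‖) • p.2) (by
    refine ContinuousOn.smul (continuousOn_fst.div continuousOn_snd.norm ?_) continuousOn_snd
    rintro ⟨t, x⟩ ⟨_, hx⟩
    exact norm_ne_zero_iff.mpr hx)
  convert h2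
  ext x
  simp only [Set.mem_ofPred_eq, mem_image, mem_prod, mem_Ioi, mem_compl_iff, mem_singleton_iff,
    Prod.exists]
  constructor
  · intro hx
    have : x ≠ 0 := norm_pos_iff.mp (hR.trans_lt hx)
    exact ⟨‖x‖, x, ⟨hx, this⟩, by rw [div_self (norm_ne_zero_iff.mpr this), one_smul]⟩
  · rintro ⟨t, z, ⟨ht, hz⟩, rfl⟩
    rw [norm_smul, norm_div, norm_norm, div_mul_cancel₀ _ (norm_ne_zero_iff.mpr hz)]
    exact ht.trans_le (le_abs_self t)

/-- When `G` has no zero outside a disc, at most one component of its complement is unbounded, since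
the outside of the disc is connected. -/
theorem plane_bound' (G : R2) (R : ℝ) (hR : 0 ≤ R) (hGR : ∀ x, R < ‖x‖ → eval x G ≠ 0)
    (S : Finset (Fin 2 → ℝ)) (hS : ∀ s ∈ S, s ∈ nz G)
    (hinj : ∀ s ∈ S, ∀ t ∈ S, connectedComponentIn (nz G) s = connectedComponentIn (nz G) t →
      s = t) : S.card ≤ G.totalDegree ^ 2 + 1 := by
  classical
  rw [← Finset.card_filter_add_card_filter_not
    (fun s => Bornology.IsBounded (connectedComponentIn (nz G) s))]
  refine add_le_add (plane_bound G _ ?_ ?_ ?_) (Finset.card_le_one.mpr ?_)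
  · exact fun s hs => hS s (Finset.mem_filter.mp hs).1
  · exact fun s hs => (Finset.mem_filter.mp hs).2
  · exact fun s hs t ht => hinj s (Finset.mem_filter.mp hs).1 t (Finset.mem_filter.mp ht).1
  · have key : ∀ s, ¬ Bornology.IsBounded (connectedComponentIn (nz G) s) →
        {x : Fin 2 → ℝ | R < ‖x‖} ⊆ connectedComponentIn (nz G) s := by
      intro s hs
      obtain ⟨x, hx, hxR⟩ : ∃ x ∈ connectedComponentIn (nz G) s, R < ‖x‖ := by
        by_contra! hcon
        exact hs (isBounded_iff_forall_norm_le.mpr ⟨R, hcon⟩)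
      rw [connectedComponentIn_eq hx]
      exact (isPreconnected_norm_gt R hR).subset_connectedComponentIn hxR hGR
    intro s hs t ht
    have hs' := Finset.mem_filter.mp hs
    have ht' := Finset.mem_filter.mp ht
    refine hinj s hs'.1 t ht'.1 ?_
    have hz : (fun _ => R + 1 : Fin 2 → ℝ) ∈ {x : Fin 2 → ℝ | R < ‖x‖} := by
      have := norm_le_pi_norm (fun _ => R + 1 : Fin 2 → ℝ) 0
      simp only [Set.mem_ofPred_eq, Real.norm_eq_abs] at this ⊢
      linarith [le_abs_self (R + 1)]
    rw [connectedComponentIn_eq (key s hs'.2 hz), connectedComponentIn_eq (key t ht'.2 hz)]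

/-! ### Stereographic projection -/

/-- A polynomial evaluated at a rational point `L / w` with `deg L, deg w ≤ 2` becomes, after
multiplication by `w ^ deg f`, a polynomial of degree at most `2 * deg f`. -/
theorem exists_clear_denom (f : MvPolynomial (Fin 3) ℝ) (w : R2) (L : Fin 3 → R2)
    (hw : w.totalDegree ≤ 2) (hL : ∀ i, (L i).totalDegree ≤ 2) :
    ∃ G : R2, G.totalDegree ≤ 2 * f.totalDegree ∧ ∀ y : Fin 2 → ℝ, eval y w ≠ 0 →
      eval y G = eval y w ^ f.totalDegree * eval (fun i => eval y (L i) / eval y w) f := by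
  refine ⟨∑ s ∈ f.support, C (coeff s f) * (w ^ (f.totalDegree - ∑ i, s i) * ∏ i, L i ^ s i),
    totalDegree_finsetSum_le fun s hs => ?_, fun y hy => ?_⟩
  · have h1 : ∑ i, s i ≤ f.totalDegree := by
      have := le_totalDegree hs
      rwa [Finsupp.sum_fintype _ _ (fun _ => rfl)] at this
    have h2 : (w ^ (f.totalDegree - ∑ i, s i)).totalDegree ≤ (f.totalDegree - ∑ i, s i) * 2 :=
      (totalDegree_pow _ _).trans (Nat.mul_le_mul_left _ hw)
    have h3 : (∏ i, L i ^ s i).totalDegree ≤ (∑ i, s i) * 2 := by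
      refine (totalDegree_finsetProd _ _).trans ?_
      rw [Finset.sum_mul]
      exact Finset.sum_le_sum fun i _ => (totalDegree_pow _ _).trans (Nat.mul_le_mul_left _ (hL i))
    refine (totalDegree_mul _ _).trans ?_
    rw [totalDegree_C, zero_add]
    refine (totalDegree_mul _ _).trans ?_
    omega
  · rw [eval_eq' _ f, map_sum, Finset.mul_sum]
    refine Finset.sum_congr rfl fun s hs => ?_
    have h1 : ∑ i, s i ≤ f.totalDegree := by
      have := le_totalDegree hs
      rwa [Finsupp.sum_fintype _ _ (fun _ => rfl)] at this
    simp only [map_mul, eval_C, map_pow, map_prod, div_pow, Finset.prod_div_distrib,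
      Finset.prod_pow_eq_pow_sum]
    rw [← Nat.sub_add_cancel h1, pow_add, Nat.sub_add_cancel h1]
    field_simp

/-- Euclidean three-space. -/
abbrev E3 := EuclideanSpace ℝ (Fin 3)

/-- Inverse stereographic projection of the plane onto the unit sphere centred at the origin,
with the basis vector of index `2` (the north pole) removed. -/
noncomputable def stereoCoord (y : Fin 2 → ℝ) : E3 :=
  (y 0 ^ 2 + y 1 ^ 2 + 1)⁻¹ • !₂[2 * y 0, 2 * y 1, y 0 ^ 2 + y 1 ^ 2 - 1]

theorem denom_pos (y : Fin 2 → ℝ) : 0 < y 0 ^ 2 + y 1 ^ 2 + 1 := by positivity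

theorem continuous_stereoCoord : Continuous stereoCoord := by
  unfold stereoCoord
  refine Continuous.smul (Continuous.inv₀ (by fun_prop) fun y => (denom_pos y).ne') ?_
  refine (PiLp.continuous_toLp 2 _).comp (continuous_pi fun i => ?_)
  fin_cases i <;> simp <;> fun_prop

theorem norm_stereoCoord (y : Fin 2 → ℝ) : ‖stereoCoord y‖ = 1 := by
  have h := (denom_pos y).ne'
  rw [EuclideanSpace.norm_eq, Real.sqrt_eq_one]
  simp only [stereoCoord, PiLp.smul_apply, Real.norm_eq_abs, sq_abs, Fin.sum_univ_three]
  simp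
  field_simp
  ring

theorem norm_stereoCoord_sub_sq (y : Fin 2 → ℝ) :
    ‖stereoCoord y - EuclideanSpace.single 2 1‖ ^ 2 = 4 / (y 0 ^ 2 + y 1 ^ 2 + 1) := by
  have h := (denom_pos y).ne'
  rw [EuclideanSpace.norm_sq_eq]
  simp only [stereoCoord, PiLp.sub_apply, PiLp.smul_apply, Real.norm_eq_abs, sq_abs,
    Fin.sum_univ_three]
  simp
  field_simp
  ring

theorem exists_stereoCoord_eq (c : E3) (hc : ‖c‖ = 1) (hne : c ≠ EuclideanSpace.single 2 1) :
    ∃ y, stereoCoord y = c := by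
  have h1 : c 0 ^ 2 + c 1 ^ 2 + c 2 ^ 2 = 1 := by
    have := EuclideanSpace.norm_sq_eq c
    simp only [Real.norm_eq_abs, sq_abs, Fin.sum_univ_three, hc] at this
    linarith
  have h2 : 1 - c 2 ≠ 0 := by
    intro h
    apply hne
    have h2 : c 2 = 1 := by linarith
    rw [h2] at h1
    ext i
    fin_cases i
    · simp; nlinarith [sq_nonneg (c 0), sq_nonneg (c 1)]
    · simp; nlinarith [sq_nonneg (c 0), sq_nonneg (c 1)]
    · simpa using h2
  refine ⟨![c 0 / (1 - c 2), c 1 / (1 - c 2)], ?_⟩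
  have hw : (c 0 / (1 - c 2)) ^ 2 + (c 1 / (1 - c 2)) ^ 2 + 1 = 2 / (1 - c 2) := by
    field_simp
    linarith
  have hw' : (c 0 / (1 - c 2)) ^ 2 + (c 1 / (1 - c 2)) ^ 2 - 1 = 2 / (1 - c 2) - 2 := by linarith
  ext i
  simp only [stereoCoord, PiLp.smul_apply, Matrix.cons_val_zero, Matrix.cons_val_one, hw, hw']
  fin_cases i <;> simp <;> field_simp
  ring

/-- Stereographic projection from a pole `q` with `f q ≠ 0`: the sphere minus `q` is parametrized by
the plane, `f` becomes a plane polynomial `G` of at most twice the degree (up to a nonvanishing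
factor), and `G` has no zero near infinity because `f` has none near `q`. -/
theorem exists_chart (f : MvPolynomial (Fin 3) ℝ) (a q : E3) (hq : ‖q - a‖ = 1)
    (hfq : eval (fun i => q i) f ≠ 0) :
    ∃ (φ : (Fin 2 → ℝ) → E3) (G : R2) (R : ℝ), Continuous φ ∧ (∀ y, ‖φ y - a‖ = 1) ∧
      (∀ x, ‖x - a‖ = 1 → x ≠ q → ∃ y, φ y = x) ∧ G.totalDegree ≤ 2 * f.totalDegree ∧
      (∀ y, eval y G ≠ 0 ↔ eval (fun i => φ y i) f ≠ 0) ∧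
      0 ≤ R ∧ ∀ y : Fin 2 → ℝ, R < ‖y‖ → eval y G ≠ 0 := by
  -- An orthonormal basis whose last vector points from the centre to the pole.
  obtain ⟨b, hb⟩ := Orthonormal.exists_orthonormalBasis_extension_of_card_eq (𝕜 := ℝ) (E := E3)
    (ι := Fin 3) (by simp) (v := fun _ => q - a) (s := {2})
    (by
      rw [orthonormal_iff_ite]
      intro i j
      rw [if_pos (Subsingleton.elim _ _)]
      simp [hq])
  have hb2 : b 2 = q - a := hb 2 rfl
  have hsingle : b.repr.symm (EuclideanSpace.single 2 1) = q - a := by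
    rw [OrthonormalBasis.repr_symm_single, hb2]
  let φ : (Fin 2 → ℝ) → E3 := fun y => a + b.repr.symm (stereoCoord y)
  let w : R2 := X 0 ^ 2 + X 1 ^ 2 + 1
  let L : Fin 3 → R2 := fun i => C (a i) * w + C (2 * b 0 i) * X 0 + C (2 * b 1 i) * X 1 +
    C (b 2 i) * (X 0 ^ 2 + X 1 ^ 2 - 1)
  have hX : ∀ i : Fin 2, (X i ^ 2 : R2).totalDegree ≤ 2 := fun i => by rw [totalDegree_X_pow]
  have hadd : ∀ p p' : R2, p.totalDegree ≤ 2 → p'.totalDegree ≤ 2 → (p + p').totalDegree ≤ 2 :=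
    fun p p' h h' => (totalDegree_add _ _).trans (max_le h h')
  have hCm : ∀ (c : ℝ) (p : R2), p.totalDegree ≤ 2 → (C c * p).totalDegree ≤ 2 := fun c p h =>
    (totalDegree_mul _ _).trans (by rwa [totalDegree_C, zero_add])
  have hwd : w.totalDegree ≤ 2 := hadd _ _ (hadd _ _ (hX 0) (hX 1)) (by simp)
  have hLd : ∀ i, (L i).totalDegree ≤ 2 := fun i => by
    refine hadd _ _ (hadd _ _ (hadd _ _ (hCm _ _ hwd) (hCm _ _ ?_)) (hCm _ _ ?_)) (hCm _ _ ?_)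
    · simp
    · simp
    · exact (totalDegree_sub _ _).trans (max_le (hadd _ _ (hX 0) (hX 1)) (by simp))
  obtain ⟨G, hGd, hG⟩ := exists_clear_denom f w L hwd hLd
  have hwe : ∀ y : Fin 2 → ℝ, eval y w = y 0 ^ 2 + y 1 ^ 2 + 1 := fun y => by simp [w]
  have hLe : ∀ (y : Fin 2 → ℝ) i, eval y (L i) / eval y w = φ y i := by
    intro y i
    have h := (denom_pos y).ne'
    simp only [φ, PiLp.add_apply, ← OrthonormalBasis.sum_repr_symm, Fin.sum_univ_three,
      PiLp.smul_apply, stereoCoord, L, hwe]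
    simp [hwe]
    field_simp
    ring
  have hGφ : ∀ y, eval y G ≠ 0 ↔ eval (fun i => φ y i) f ≠ 0 := by
    intro y
    have h : eval y w ≠ 0 := by rw [hwe]; exact (denom_pos y).ne'
    rw [hG y h]
    simp only [hLe]
    simp [h]
  have hdist : ∀ y, ‖φ y - q‖ ^ 2 = 4 / (y 0 ^ 2 + y 1 ^ 2 + 1) := by
    intro y
    rw [← norm_stereoCoord_sub_sq, ← b.repr.symm.norm_map (stereoCoord y - _), map_sub, hsingle]
    congr 2
    simp only [φ]
    abel
  have hcont : Continuous fun x : E3 => eval (fun i => x i) f :=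
    (continuous_eval f).comp (PiLp.continuous_ofLp 2 _)
  obtain ⟨r, hr, hrf⟩ := Metric.isOpen_iff.mp (isOpen_ne_fun hcont continuous_const) q hfq
  refine ⟨φ, G, 2 / r, continuous_const.add (b.repr.symm.continuous.comp continuous_stereoCoord),
    fun y => ?_, fun x hx hxq => ?_, hGd, hGφ, by positivity, fun y hy => (hGφ y).mpr (hrf ?_)⟩
  · simp [φ, norm_stereoCoord]
  · obtain ⟨y, hy⟩ := exists_stereoCoord_eq (b.repr (x - a))
      (by rwa [LinearIsometryEquiv.norm_map]) (by
      intro h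
      rw [← h, LinearIsometryEquiv.symm_apply_apply] at hsingle
      exact hxq (sub_left_injective hsingle))
    exact ⟨y, by simp [φ, hy]⟩
  · rw [mem_ball_iff_norm]
    refine lt_of_pow_lt_pow_left₀ 2 hr.le ?_
    rw [hdist, div_lt_iff₀ (denom_pos y)]
    by_contra! hcon
    refine hy.not_ge ((pi_norm_le_iff_of_nonneg (by positivity)).mpr fun i => ?_)
    rw [Real.norm_eq_abs, le_div_iff₀ hr]
    refine (abs_le_of_sq_le_sq' ?_ zero_le_two).2
    rw [mul_pow, sq_abs]
    fin_cases i <;> simp <;> nlinarith [sq_nonneg (y 0 * r), sq_nonneg (y 1 * r), sq_nonneg r]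

/-- Every component of the sphere minus `Z(f)`, except possibly the one of the pole `q`, has a
representative in the plane, and distinct components give distinct components of `nz G`. -/
theorem card_components_le (f : MvPolynomial (Fin 3) ℝ) (a q : E3) (hq : ‖q - a‖ = 1)
    (hfq : eval (fun i => q i) f ≠ 0)
    (T : Finset (ConnectedComponents ↥{x : E3 | ‖x - a‖ = 1 ∧ eval (fun i => x i) f ≠ 0})) :
    T.card ≤ (2 * f.totalDegree) ^ 2 + 2 := by
  classical
  obtain ⟨φ, G, R, hφ, hφ1, hsurj, hGd, hG, hR, hGR⟩ := exists_chart f a q hq hfq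
  let Φ : nz G → ↥{x : E3 | ‖x - a‖ = 1 ∧ eval (fun i => x i) f ≠ 0} :=
    fun y => ⟨φ y, hφ1 y, (hG y).mp y.2⟩
  have hΦ : Continuous Φ := (hφ.comp continuous_subtype_val).subtype_mk _
  let c₀ : ConnectedComponents ↥{x : E3 | ‖x - a‖ = 1 ∧ eval (fun i => x i) f ≠ 0} :=
    ConnectedComponents.mk ⟨q, hq, hfq⟩
  have hex : ∀ c ∈ T.erase c₀, ∃ y : Fin 2 → ℝ, ∃ h : y ∈ nz G, ConnectedComponents.mk (Φ ⟨y, h⟩) = c := by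
    intro c hc
    obtain ⟨x, rfl⟩ := ConnectedComponents.surjective_coe c
    have hxq : x.1 ≠ q := fun h => Finset.ne_of_mem_erase hc (congrArg _ (Subtype.ext h))
    obtain ⟨y, hy⟩ := hsurj x.1 x.2.1 hxq
    have hyG : y ∈ nz G := (hG y).mpr (by rw [hy]; exact x.2.2)
    exact ⟨y, hyG, congrArg _ (Subtype.ext hy)⟩
  choose! y hy hyc using hex
  have hcomp : ∀ c ∈ T.erase c₀, ∀ c' ∈ T.erase c₀,
      connectedComponentIn (nz G) (y c) = connectedComponentIn (nz G) (y c') → c = c' := by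
    intro c hc c' hc' h
    have hmem := mem_connectedComponentIn (hy c hc)
    rw [h, connectedComponentIn_eq_image (hy c' hc')] at hmem
    obtain ⟨z, hz, hzy⟩ := hmem
    obtain rfl : z = ⟨y c, hy c hc⟩ := Subtype.ext hzy
    rw [← hyc c hc, ← hyc c' hc', ConnectedComponents.coe_eq_coe']
    exact hΦ.mapsTo_connectedComponent _ hz
  have hinj : Set.InjOn y (T.erase c₀) := fun c hc c' hc' h => hcomp c hc c' hc' (by rw [h])
  have key := plane_bound' G R hR hGR ((T.erase c₀).image y)
    (by
      intro s hs
      obtain ⟨c, hc, rfl⟩ := Finset.mem_image.mp hs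
      exact hy c hc)
    (by
      intro s hs t ht h
      obtain ⟨c, hc, rfl⟩ := Finset.mem_image.mp hs
      obtain ⟨c', hc', rfl⟩ := Finset.mem_image.mp ht
      rw [hcomp c hc c' hc' h])
  rw [Finset.card_image_of_injOn hinj] at key
  have h1 := Finset.pred_card_le_card_erase (s := T) (a := c₀)
  have h2 : G.totalDegree ^ 2 ≤ (2 * f.totalDegree) ^ 2 := Nat.pow_le_pow_left hGd 2
  omega

end SphereComp

theorem components_of_sphere_minus_zero_set :
    ∃ C : ℝ, 0 < C ∧
      ∀ (f : MvPolynomial (Fin 3) ℝ) (D : ℕ) (a : EuclideanSpace ℝ (Fin 3)),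
        f.totalDegree = D → 1 ≤ D →
        (∃ x : EuclideanSpace ℝ (Fin 3), ‖x - a‖ = 1 ∧
            MvPolynomial.eval (fun i => x i) f ≠ 0) →
        Finite (ConnectedComponents
          ↥{x : EuclideanSpace ℝ (Fin 3) | ‖x - a‖ = 1 ∧
              MvPolynomial.eval (fun i => x i) f ≠ 0}) ∧
        (Nat.card (ConnectedComponents
          ↥{x : EuclideanSpace ℝ (Fin 3) | ‖x - a‖ = 1 ∧
              MvPolynomial.eval (fun i => x i) f ≠ 0}) : ℝ) ≤ C * (D : ℝ) ^ 2 := by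
  refine ⟨6, by norm_num, ?_⟩
  rintro f D a rfl hD ⟨q, hq, hfq⟩
  have key := SphereComp.card_components_le f a q hq hfq
  have hfin : Finite (ConnectedComponents
      ↥{x : EuclideanSpace ℝ (Fin 3) | ‖x - a‖ = 1 ∧
        MvPolynomial.eval (fun i => x i) f ≠ 0}) := by
    by_contra hinf
    rw [not_finite_iff_infinite] at hinf
    obtain ⟨T, hT⟩ := Infinite.exists_subset_card_eq (ConnectedComponents
      ↥{x : EuclideanSpace ℝ (Fin 3) | ‖x - a‖ = 1 ∧
        MvPolynomial.eval (fun i => x i) f ≠ 0}) ((2 * f.totalDegree) ^ 2 + 3)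
    have := key T
    omega
  refine ⟨hfin, ?_⟩
  have := Fintype.ofFinite (ConnectedComponents
      ↥{x : EuclideanSpace ℝ (Fin 3) | ‖x - a‖ = 1 ∧
        MvPolynomial.eval (fun i => x i) f ≠ 0})
  have h := key Finset.univ
  rw [Finset.card_univ, ← Nat.card_eq_fintype_card] at h
  have h' : (2 * f.totalDegree) ^ 2 + 2 ≤ 6 * f.totalDegree ^ 2 := by nlinarith
  exact_mod_cast h.trans h'
end

section
/- Let p₁, p₂, p₃ be three pairwise distinct points in ℝ³. Then the set of points c ∈ ℝ³ with ‖c − p₁‖ = ‖c − p₂‖ = ‖c − p₃‖ = 1 has at most two elements. Equivalently, any three distinct points of ℝ³ lie on at most two common unit spheres. -/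
/-!
Distinct cospherical points are affinely independent, so `p₁, p₂, p₃` have a two-dimensional
vector span. Points and centers play symmetric roles: three distinct centers would all lie on the
unit sphere around `p₁`, so their vector span would be two-dimensional as well. A difference of two
centers is orthogonal to a difference of two of the `pᵢ`, since both centers are equidistant from
those points. Two orthogonal planes do not fit in a three-dimensional space.
-/

theorem finrank_vectorSpan_of_sphere {p x y z : EuclideanSpace ℝ (Fin 3)}
    (hx : dist x p = 1) (hy : dist y p = 1) (hz : dist z p = 1)
    (hxy : x ≠ y) (hxz : x ≠ z) (hyz : y ≠ z) :
    Module.finrank ℝ (vectorSpan ℝ (Set.range ![x, y, z])) = 2 := by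
  have hc : EuclideanGeometry.Cospherical ({x, y, z} : Set (EuclideanSpace ℝ (Fin 3))) :=
    ⟨p, 1, by simp [hx, hy, hz]⟩
  exact (hc.affineIndependent_of_ne hxy hxz hyz).finrank_vectorSpan (by simp)

theorem vectorSpan_isOrtho_of_dist_eq {ι κ : Type*} {c : ι → EuclideanSpace ℝ (Fin 3)}
    {p : κ → EuclideanSpace ℝ (Fin 3)} (h : ∀ i j, dist (p j) (c i) = 1) :
    vectorSpan ℝ (Set.range c) ⟂ vectorSpan ℝ (Set.range p) := by
  rw [vectorSpan, vectorSpan, Submodule.isOrtho_span]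
  rintro _ ⟨_, ⟨i, rfl⟩, _, ⟨j, rfl⟩, rfl⟩ _ ⟨_, ⟨k, rfl⟩, _, ⟨l, rfl⟩, rfl⟩
  exact EuclideanGeometry.inner_vsub_vsub_of_dist_eq_of_dist_eq
    ((h j l).trans (h j k).symm) ((h i l).trans (h i k).symm)

theorem three_points_on_at_most_two_unit_spheres
    (p₁ p₂ p₃ : EuclideanSpace ℝ (Fin 3))
    (h12 : p₁ ≠ p₂) (h13 : p₁ ≠ p₃) (h23 : p₂ ≠ p₃) :
    ∃ a b : EuclideanSpace ℝ (Fin 3),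
      {c : EuclideanSpace ℝ (Fin 3) |
        ‖c - p₁‖ = 1 ∧ ‖c - p₂‖ = 1 ∧ ‖c - p₃‖ = 1} ⊆ {a, b} := by
  by_contra! H
  simp only [Set.not_subset, Set.mem_ofPred_eq, Set.mem_insert_iff, Set.mem_singleton_iff, not_or,
    ← dist_eq_norm] at H
  obtain ⟨a, ⟨ha1, ha2, ha3⟩, -⟩ := H 0 0
  obtain ⟨b, ⟨hb1, hb2, hb3⟩, hba, -⟩ := H a a
  obtain ⟨c, ⟨hc1, hc2, hc3⟩, hca, hcb⟩ := H a b
  have hC := finrank_vectorSpan_of_sphere ha1 hb1 hc1 (Ne.symm hba) (Ne.symm hca)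
    (Ne.symm hcb)
  have hP := finrank_vectorSpan_of_sphere (p := a) (by rwa [dist_comm]) (by rwa [dist_comm])
    (by rwa [dist_comm]) h12 h13 h23
  have hO : vectorSpan ℝ (Set.range ![a, b, c]) ⟂ vectorSpan ℝ (Set.range ![p₁, p₂, p₃]) := by
    apply vectorSpan_isOrtho_of_dist_eq
    intro i j
    rw [dist_comm]
    fin_cases i <;> fin_cases j <;> assumption
  have hle := Submodule.finrank_mono hO.le
  have hsum := Submodule.finrank_add_finrank_orthogonal (vectorSpan ℝ (Set.range ![p₁, p₂, p₃]))
  rw [finrank_euclideanSpace_fin] at hsum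
  omega
end

section
/- Let f, g ∈ ℝ[x,y] be bivariate real polynomials with f nonzero. Then the set of real numbers ε such that f and g + ε (where ε is added as a constant polynomial) have a common nonconstant factor is finite. -/
/-!
A common nonconstant factor `h` of `f` and `g + ε` has an irreducible divisor, which up to
associates is one of the finitely many irreducible factors `q` of `f` (the polynomial ring is a
UFD and `f ≠ 0`). Each such `q` serves at most one `ε`: if `q` divides both `g + ε` and `g + δ`
with `ε ≠ δ`, then it divides the nonzero constant `ε - δ`, hence is a unit.
-/

theorem finitely_many_bad_epsilons
    (f g : MvPolynomial (Fin 2) ℝ) (hf : f ≠ 0) :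
    {ε : ℝ | ∃ h : MvPolynomial (Fin 2) ℝ,
      0 < h.totalDegree ∧ h ∣ f ∧ h ∣ (g + MvPolynomial.C ε)}.Finite := by
  classical
  have key : ∀ q ∈ (UniqueFactorizationMonoid.factors f).toFinset,
      {ε : ℝ | q ∣ g + MvPolynomial.C ε}.Finite := by
    intro q hq
    have hirr := UniqueFactorizationMonoid.irreducible_of_factor q (Multiset.mem_toFinset.mp hq)
    refine Set.Subsingleton.finite fun ε hε δ hδ => ?_
    by_contra hne
    have hd : q ∣ MvPolynomial.C (ε - δ) := by
      have := dvd_sub hε hδ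
      rwa [add_sub_add_left_eq_sub, ← map_sub] at this
    exact hirr.not_isUnit
      (isUnit_of_dvd_unit hd ((sub_ne_zero.mpr hne).isUnit.map MvPolynomial.C))
  refine (Set.Finite.biUnion (Finset.finite_toSet _) key).subset ?_
  rintro ε ⟨h, hdeg, hhf, hhg⟩
  have hunit : ¬ IsUnit h := fun hu =>
    hdeg.ne' (MvPolynomial.isUnit_iff_totalDegree_of_isReduced.mp hu).2
  obtain ⟨p, hp, hph⟩ := WfDvdMonoid.exists_irreducible_factor hunit (ne_zero_of_dvd_ne_zero hf hhf)
  obtain ⟨q, hq, hpq⟩ :=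
    UniqueFactorizationMonoid.exists_mem_factors_of_dvd hf hp (hph.trans hhf)
  exact Set.mem_biUnion (Multiset.mem_toFinset.mpr hq) (hpq.symm.dvd.trans (hph.trans hhg))
end
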